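/- arXiv:1412.5622 — 3 statements merged into one kernel-verified Lean document; each statement's English description precedes it below -/
import Mathlib

section
/- There exists a bounded permutation parameter f : 𝔖 → ℝ that is finitely approximable but not finitely forcible. -/
open Filter Topology

/-- The type of finite permutations of all orders: a permutation of order `n`
is a bijection of `Fin n` (representing `[n] = {1,…,n}`). -/
abbrev Perms : Type := Σ n : ℕ, Equiv.Perm (Fin n)

/-- A permutation `σ` of order `n` is indecomposable if there is no `m` with
`1 ≤ m < n` such that `σ` maps the first `m` elements onto the first `m` elements. -/
def Indecomposable {n : ℕ} (σ : Equiv.Perm (Fin n)) : Prop :=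
  ¬ ∃ m : ℕ, 1 ≤ m ∧ m < n ∧ ∀ i : Fin n, ((σ i : ℕ) < m ↔ (i : ℕ) < m)

/-- Indecomposability for a permutation of arbitrary order. -/
def Perms.Indec (σ : Perms) : Prop := Indecomposable σ.2

/-- `f` is an occurrence of `π` in `σ`: a strictly increasing map preserving
the relative order of values. -/
def IsOcc {k n : ℕ} (π : Equiv.Perm (Fin k)) (σ : Equiv.Perm (Fin n))
    (f : Fin k → Fin n) : Prop :=
  StrictMono f ∧ ∀ i j : Fin k, π i < π j ↔ σ (f i) < σ (f j)

/-- `Λ(π,σ)`: the number of occurrences of `π` in `σ`. -/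
noncomputable def lam {k n : ℕ} (π : Equiv.Perm (Fin k)) (σ : Equiv.Perm (Fin n)) : ℕ :=
  Nat.card {f : Fin k → Fin n // IsOcc π σ f}

/-- The (sub)permutation density `t(π,σ)`. -/
noncomputable def dens {k n : ℕ} (π : Equiv.Perm (Fin k)) (σ : Equiv.Perm (Fin n)) : ℝ :=
  if k ≤ n then (lam π σ : ℝ) / (n.choose k : ℝ) else 0

/-- The density `t(π,σ)` for permutations of arbitrary orders. -/
noncomputable def subDens (π σ : Perms) : ℝ := dens π.2 σ.2

/-- A permutation parameter `f : 𝔖 → ℝ` is finitely forcible if there is a finite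
family `A` of permutations such that for every `ε > 0` there are `n₀` and `δ > 0`
such that any two permutations of order at least `n₀` whose densities of members
of `A` differ by less than `δ` have `f`-values within `ε`. -/
def FinitelyForcible (f : Perms → ℝ) : Prop :=
  ∃ A : Finset Perms, ∀ ε : ℝ, 0 < ε → ∃ n₀ : ℕ, ∃ δ : ℝ, 0 < δ ∧
    ∀ σ π : Perms, n₀ ≤ σ.1 → n₀ ≤ π.1 →
      (∀ τ ∈ A, |subDens τ σ - subDens τ π| < δ) → |f σ - f π| < ε

/-- A permutation parameter `f : 𝔖 → ℝ` is finitely approximable if for every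
`ε > 0` there are `δ > 0`, `n₀` and a finite family `A` of permutations such that
any two permutations of order at least `n₀` whose densities of members of `A`
differ by less than `δ` have `f`-values within `ε`. -/
def FinitelyApproximable (f : Perms → ℝ) : Prop :=
  ∀ ε : ℝ, 0 < ε → ∃ δ : ℝ, 0 < δ ∧ ∃ n₀ : ℕ, ∃ A : Finset Perms,
    ∀ σ π : Perms, n₀ ≤ σ.1 → n₀ ≤ π.1 →
      (∀ τ ∈ A, |subDens τ σ - subDens τ π| < δ) → |f σ - f π| < ε

/-- `f` is an occurrence of the pattern `p 0, …, p (k - 1)` in the sequence `s 0, …, s (n - 1)`. -/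
def IsPatternOcc (k : ℕ) (p : ℕ → ℕ) (n : ℕ) (s : ℕ → ℕ) (f : Fin k → Fin n) : Prop :=
  StrictMono f ∧ ∀ i j : Fin k, p i < p j ↔ s (f i) < s (f j)

/-- The number of occurrences of `p 0, …, p (k - 1)` in `s 0, …, s (n - 1)`. -/
noncomputable def patternCount (k : ℕ) (p : ℕ → ℕ) (n : ℕ) (s : ℕ → ℕ) : ℕ :=
  Nat.card {f : Fin k → Fin n // IsPatternOcc k p n s f}

/-- The direct sum of a sequence `s` of length `a` and a sequence `t`. -/
def directSum (a : ℕ) (s t : ℕ → ℕ) (i : ℕ) : ℕ :=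
  if i < a then s i else a + t (i - a)

/-- The pattern `p` of length `k` is a direct sum of its first `m` entries and the remaining ones. -/
def SplitsAt (k : ℕ) (p : ℕ → ℕ) (m : ℕ) : Prop :=
  ∀ i j, i < m → m ≤ j → j < k → p i < p j

lemma patternCount_zero (p : ℕ → ℕ) (n : ℕ) (s : ℕ → ℕ) : patternCount 0 p n s = 1 := by
  rw [patternCount, Nat.card_eq_one_iff_unique]
  refine ⟨⟨fun f g => Subtype.ext (funext fun i => i.elim0)⟩, ⟨⟨fun i => i.elim0, ?_, ?_⟩⟩⟩
  · exact fun i => i.elim0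
  · exact fun i => i.elim0

lemma patternCount_one (p : ℕ → ℕ) (n : ℕ) (s : ℕ → ℕ) : patternCount 1 p n s = n := by
  have h : ∀ f : Fin 1 → Fin n, IsPatternOcc 1 p n s f := fun f =>
    ⟨Subsingleton.strictMono f, fun i j => by simp [Subsingleton.elim i j]⟩
  rw [patternCount, Nat.card_congr (Equiv.subtypeUnivEquiv h)]
  simp

lemma lt_iff_lt_card_filter {k n a : ℕ} {f : Fin k → Fin n} (hf : StrictMono f) (i : Fin k) :
    (f i : ℕ) < a ↔ (i : ℕ) < (Finset.univ.filter fun j => (f j : ℕ) < a).card := by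
  constructor
  · intro hi
    have hsub : Finset.Iic i ⊆ Finset.univ.filter fun j => (f j : ℕ) < a := by
      intro j hj
      have hle : f j ≤ f i := hf.monotone (Finset.mem_Iic.mp hj)
      simp only [Finset.mem_filter, Finset.mem_univ, true_and]
      exact lt_of_le_of_lt hle hi
    have hcard := Finset.card_le_card hsub
    rw [Fin.card_Iic] at hcard
    omega
  · intro hi
    by_contra hcon
    have hsub : (Finset.univ.filter fun j => (f j : ℕ) < a) ⊆ Finset.Iio i := by
      intro j hj
      simp only [Finset.mem_filter, Finset.mem_univ, true_and] at hj
      rw [Finset.mem_Iio, ← hf.lt_iff_lt]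
      exact Fin.lt_def.mpr (by omega)
    have hcard := Finset.card_le_card hsub
    rw [Fin.card_Iio] at hcard
    omega

lemma IsPatternOcc.append {m l a b : ℕ} {p s t : ℕ → ℕ} (hs : ∀ i < a, s i < a)
    (hp : SplitsAt (m + l) p m) {g : Fin m → Fin a} {h : Fin l → Fin b}
    (hg : IsPatternOcc m p a s g) (hh : IsPatternOcc l (fun i => p (m + i)) b t h) :
    IsPatternOcc (m + l) p (a + b) (directSum a s t)
      (Fin.append (Fin.castAdd b ∘ g) (Fin.natAdd a ∘ h)) := by
  constructor
  · intro i j hij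
    induction i using Fin.addCases with
    | left i =>
      induction j using Fin.addCases with
      | left j =>
        simp only [Fin.append_left, Function.comp_apply]
        exact hg.1 (show i < j from hij)
      | right j =>
        simp only [Fin.append_left, Fin.append_right, Function.comp_apply, Fin.lt_def,
          Fin.val_castAdd, Fin.val_natAdd]
        omega
    | right i =>
      induction j using Fin.addCases with
      | left j =>
        simp only [Fin.lt_def, Fin.val_castAdd, Fin.val_natAdd] at hij
        omega
      | right j =>
        have := hh.1 (show i < j by simpa using hij)
        simpa using this
  · intro i j
    induction i using Fin.addCases with
    | left i =>
      induction j using Fin.addCases with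
      | left j => simpa [directSum] using hg.2 i j
      | right j =>
        have h1 := hp i (m + j) i.2 (by omega) (by omega)
        have h2 := hs (g i) (g i).2
        simp only [Fin.append_left, Fin.append_right, Function.comp_apply, directSum,
          Fin.val_castAdd, Fin.val_natAdd, h1, true_iff, Fin.is_lt, if_true]
        rw [if_neg (by omega)]
        omega
    | right i =>
      induction j using Fin.addCases with
      | left j =>
        have h1 := hp j (m + i) j.2 (by omega) (by omega)
        have h2 := hs (g j) (g j).2
        simp only [Fin.append_left, Fin.append_right, Function.comp_apply, directSum,
          Fin.val_castAdd, Fin.val_natAdd, not_lt_of_gt h1, false_iff, Fin.is_lt, if_true]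
        rw [if_neg (by omega)]
        omega
      | right j => simpa [directSum] using hh.2 i j

lemma exists_eq_append {m l a b : ℕ} (f : Fin (m + l) → Fin (a + b))
    (hf : ∀ i, (f i : ℕ) < a ↔ (i : ℕ) < m) :
    ∃ (g : Fin m → Fin a) (h : Fin l → Fin b),
      Fin.append (Fin.castAdd b ∘ g) (Fin.natAdd a ∘ h) = f := by
  have hright : ∀ i : Fin l, a ≤ (f (Fin.natAdd m i) : ℕ) := fun i => by
    have := hf (Fin.natAdd m i)
    simp only [Fin.val_natAdd] at this
    omega
  refine ⟨fun i => ⟨f (Fin.castAdd l i), (hf _).mpr i.2⟩,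
    fun i => ⟨f (Fin.natAdd m i) - a, by have := hright i; omega⟩, ?_⟩
  ext i
  induction i using Fin.addCases with
  | left i => simp
  | right i => have := hright i; simp; omega

lemma IsPatternOcc.of_append {m l a b : ℕ} {p s t : ℕ → ℕ} (hs : ∀ i < a, s i < a)
    {g : Fin m → Fin a} {h : Fin l → Fin b}
    (H : IsPatternOcc (m + l) p (a + b) (directSum a s t)
      (Fin.append (Fin.castAdd b ∘ g) (Fin.natAdd a ∘ h))) :
    SplitsAt (m + l) p m ∧ IsPatternOcc m p a s g ∧
      IsPatternOcc l (fun i => p (m + i)) b t h := by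
  refine ⟨fun i j hi hj hjk => ?_, ⟨fun i j hij => ?_, fun i j => ?_⟩,
    ⟨fun i j hij => ?_, fun i j => ?_⟩⟩
  · have h1 := H.2 (Fin.castAdd l ⟨i, hi⟩) (Fin.natAdd m ⟨j - m, by omega⟩)
    have h2 := hs (g ⟨i, hi⟩) (g ⟨i, hi⟩).2
    simp only [Fin.append_left, Fin.append_right, Function.comp_apply, directSum,
      Fin.val_castAdd, Fin.val_natAdd, Fin.is_lt, if_true, Nat.add_sub_cancel' hj] at h1
    rw [if_neg (by omega)] at h1
    exact h1.mpr (by omega)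
  · have := H.1 (show Fin.castAdd l i < Fin.castAdd l j from hij)
    simp only [Fin.append_left, Function.comp_apply] at this
    exact this
  · simpa [directSum] using H.2 (Fin.castAdd l i) (Fin.castAdd l j)
  · simpa using H.1 (show Fin.natAdd m i < Fin.natAdd m j by simpa using hij)
  · simpa [directSum] using H.2 (Fin.natAdd m i) (Fin.natAdd m j)

open Classical in
lemma card_patternOcc_filter {m l a b : ℕ} {p s t : ℕ → ℕ} (hs : ∀ i < a, s i < a) :
    Nat.card {f : Fin (m + l) → Fin (a + b) //
      IsPatternOcc (m + l) p (a + b) (directSum a s t) f ∧ ∀ i, (f i : ℕ) < a ↔ (i : ℕ) < m} =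
    if SplitsAt (m + l) p m then
      patternCount m p a s * patternCount l (fun i => p (m + i)) b t else 0 := by
  split_ifs with hp
  · rw [patternCount, patternCount, ← Nat.card_prod]
    symm
    refine Nat.card_congr (Equiv.ofBijective (fun x =>
      ⟨Fin.append (Fin.castAdd b ∘ x.1.1) (Fin.natAdd a ∘ x.2.1),
        x.1.2.append hs hp x.2.2, fun i => ?_⟩) ⟨?_, ?_⟩)
    · induction i using Fin.addCases with
      | left i => simp
      | right i => simp
    · rintro ⟨⟨g, hg⟩, ⟨h, hh⟩⟩ ⟨⟨g', hg'⟩, ⟨h', hh'⟩⟩ hx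
      have heq := congrArg Subtype.val hx
      simp only at heq
      have h1 : g = g' := funext fun i => by simpa using congrFun heq (Fin.castAdd l i)
      have h2 : h = h' := funext fun i => by simpa using congrFun heq (Fin.natAdd m i)
      subst h1 h2
      rfl
    · rintro ⟨f, hf, hlt⟩
      obtain ⟨g, h, rfl⟩ := exists_eq_append f hlt
      obtain ⟨-, hg, hh⟩ := hf.of_append hs
      exact ⟨⟨⟨g, hg⟩, ⟨h, hh⟩⟩, rfl⟩
  · have : IsEmpty {f : Fin (m + l) → Fin (a + b) //
      IsPatternOcc (m + l) p (a + b) (directSum a s t) f ∧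
        ∀ i, (f i : ℕ) < a ↔ (i : ℕ) < m} := by
      refine ⟨fun ⟨f, hf, hlt⟩ => hp ?_⟩
      obtain ⟨g, h, rfl⟩ := exists_eq_append f hlt
      exact (hf.of_append hs).1
    exact Nat.card_of_isEmpty

open Classical in
lemma patternCount_directSum (k : ℕ) (p : ℕ → ℕ) {a b : ℕ} {s t : ℕ → ℕ}
    (hs : ∀ i < a, s i < a) :
    patternCount k p (a + b) (directSum a s t) =
      ∑ x ∈ Finset.HasAntidiagonal.antidiagonal k, if SplitsAt k p x.1 then
        patternCount x.1 p a s * patternCount x.2 (fun i => p (x.1 + i)) b t else 0 := by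
  rw [patternCount, Nat.subtype_card (Finset.univ.filter
    (IsPatternOcc k p (a + b) (directSum a s t))) (by simp)]
  rw [Finset.card_eq_sum_card_fiberwise (t := Finset.HasAntidiagonal.antidiagonal k)
    (f := fun f => ((Finset.univ.filter fun j => (f j : ℕ) < a).card,
      k - (Finset.univ.filter fun j => (f j : ℕ) < a).card))]
  · refine Finset.sum_congr rfl fun x hx => ?_
    obtain ⟨m, l⟩ := x
    obtain rfl : m + l = k := by simpa using hx
    rw [← card_patternOcc_filter hs]
    symm
    refine Nat.subtype_card _ fun f => ?_
    simp only [Finset.mem_filter, Finset.mem_univ, true_and, Prod.mk.injEq]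
    refine and_congr_right fun hf => ⟨fun h i => ?_, fun h => ?_⟩
    · rw [lt_iff_lt_card_filter hf.1, h.1]
    · have hset : (Finset.univ.filter fun j => (f j : ℕ) < a) =
          Finset.univ.filter fun j : Fin (m + l) => (j : ℕ) < m := by
        ext j
        simp [h]
      rw [hset, Fin.card_filter_val_lt]
      omega
  · intro f _
    have := Finset.card_le_univ (Finset.univ.filter fun j => (f j : ℕ) < a)
    simp only [Fintype.card_fin] at this
    exact Finset.HasAntidiagonal.mem_antidiagonal.mpr (Nat.add_sub_cancel' this)

open Classical in
lemma patternCount_directSum_add_two (r : ℕ) (p : ℕ → ℕ) {a b : ℕ} {s t : ℕ → ℕ}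
    (hs : ∀ i < a, s i < a) :
    patternCount (r + 2) p (a + b) (directSum a s t) =
      patternCount (r + 2) p a s + patternCount (r + 2) p b t +
      ∑ x ∈ Finset.HasAntidiagonal.antidiagonal r, if SplitsAt (r + 2) p (x.1 + 1) then
        patternCount (x.1 + 1) p a s *
          patternCount (x.2 + 1) (fun i => p (x.1 + 1 + i)) b t else 0 := by
  have h0 : SplitsAt (r + 2) p 0 := fun i j hi => absurd hi (Nat.not_lt_zero i)
  have h1 : SplitsAt (r + 2) p (r + 1 + 1) := fun i j _ hj hj' => absurd hj (by omega)
  rw [patternCount_directSum _ _ hs, Finset.Nat.sum_antidiagonal_succ,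
    Finset.Nat.sum_antidiagonal_succ']
  simp only [h0, h1, if_true, patternCount_zero, zero_add, one_mul, mul_one]
  ring

/-- If two sequences agree on all patterns of length at most `d`, then the two direct sums formed
from them agree on all patterns of length at most `d + 1`. -/
lemma patternCount_directSum_comm {d N : ℕ} {u v : ℕ → ℕ} (hu : ∀ i < N, u i < N)
    (hv : ∀ i < N, v i < N)
    (huv : ∀ r ≤ d, ∀ p, patternCount r p N u = patternCount r p N v)
    {r : ℕ} (hr : r ≤ d + 1) (p : ℕ → ℕ) :
    patternCount r p (N + N) (directSum N u v) = patternCount r p (N + N) (directSum N v u) := by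
  match r with
  | 0 => simp only [patternCount_zero]
  | 1 => simp only [patternCount_one]
  | r + 2 =>
    rw [patternCount_directSum_add_two r p hu, patternCount_directSum_add_two r p hv,
      add_comm (patternCount (r + 2) p N u)]
    congr 1
    refine Finset.sum_congr rfl fun x hx => ?_
    have hx' : x.1 + x.2 = r := by simpa using hx
    rw [huv (x.1 + 1) (by omega), huv (x.2 + 1) (by omega)]

/-- The pattern `1, 0, 2, 3, 4, …`. -/
def swapPattern (i : ℕ) : ℕ := Equiv.swap 0 1 i

lemma swapPattern_of_two_le {i : ℕ} (hi : 2 ≤ i) : swapPattern i = i :=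
  Equiv.swap_apply_of_ne_of_ne (by omega) (by omega)

lemma swapPattern_lt {i m : ℕ} (hi : i < m) (hm : 2 ≤ m) : swapPattern i < m := by
  match i with
  | 0 => simp [swapPattern]; omega
  | 1 => simp [swapPattern]; omega
  | i + 2 => rwa [swapPattern_of_two_le (by omega)]

lemma splitsAt_swapPattern {k m : ℕ} (hm : 2 ≤ m) : SplitsAt k swapPattern m :=
  fun _ _ hi hj _ => by
    rw [swapPattern_of_two_le (hm.trans hj)]
    exact (swapPattern_lt hi hm).trans_le hj

lemma not_splitsAt_swapPattern (k : ℕ) : ¬ SplitsAt (k + 2) swapPattern 1 := fun h => by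
  have := h 0 1 (by omega) (by omega) (by omega)
  simp [swapPattern] at this

lemma patternCount_swapPattern_directSum_sub {d N : ℕ} (hd : 1 ≤ d) {u v : ℕ → ℕ}
    (hu : ∀ i < N, u i < N) (hv : ∀ i < N, v i < N)
    (huv : ∀ r ≤ d, ∀ p, patternCount r p N u = patternCount r p N v) :
    (patternCount (d + 2) swapPattern (N + N) (directSum N u v) : ℤ) -
        patternCount (d + 2) swapPattern (N + N) (directSum N v u) =
      ((patternCount (d + 1) swapPattern N u : ℤ) - patternCount (d + 1) swapPattern N v) * N := by
  classical
  rw [patternCount_directSum_add_two d _ hu, patternCount_directSum_add_two d _ hv]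
  push_cast
  rw [add_comm (patternCount (d + 2) swapPattern N u : ℤ), add_sub_add_left_eq_sub,
    ← Finset.sum_sub_distrib, Finset.sum_eq_single (d, 0)]
  · rw [if_pos (splitsAt_swapPattern (by omega)), if_pos (splitsAt_swapPattern (by omega))]
    simp only [zero_add, patternCount_one]
    ring
  · rintro ⟨x, y⟩ hx hne
    have hx' : x + y = d := by simpa using hx
    match x with
    | 0 => simp [not_splitsAt_swapPattern]
    | x + 1 =>
      have hy : y ≠ 0 := by
        rintro rfl
        exact hne (by simpa using hx')
      rw [huv (x + 1 + 1) (by omega), huv (y + 1) (by omega), sub_self]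
  · intro h
    simp at h

/-- Two sequences of length `2 ^ k * n`, built from a decreasing and an increasing sequence of
length `n` by the Thue-Morse substitution `(u, v) ↦ (u ⊕ v, v ⊕ u)`. -/
def thueMorsePair (n : ℕ) : ℕ → (ℕ → ℕ) × (ℕ → ℕ)
  | 0 => (fun i => n - 1 - i, id)
  | k + 1 => (directSum (2 ^ k * n) (thueMorsePair n k).1 (thueMorsePair n k).2,
      directSum (2 ^ k * n) (thueMorsePair n k).2 (thueMorsePair n k).1)

lemma directSum_lt {a b : ℕ} {s t : ℕ → ℕ} (hs : ∀ i < a, s i < a) (ht : ∀ i < b, t i < b)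
    (i : ℕ) (hi : i < a + b) : directSum a s t i < a + b := by
  unfold directSum
  split_ifs with h
  · have := hs i h
    omega
  · have := ht (i - a) (by omega)
    omega

lemma directSum_injOn {a b : ℕ} {s t : ℕ → ℕ} (hs : ∀ i < a, s i < a)
    (hs' : Set.InjOn s (Set.Iio a)) (ht' : Set.InjOn t (Set.Iio b)) :
    Set.InjOn (directSum a s t) (Set.Iio (a + b)) := by
  intro i hi j hj hij
  simp only [Set.mem_Iio] at hi hj
  unfold directSum at hij
  split_ifs at hij with h1 h2 h2
  · exact hs' h1 h2 hij
  · have := hs i h1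
    omega
  · have := hs j h2
    omega
  · have := ht' (show i - a ∈ Set.Iio b by simp; omega) (show j - a ∈ Set.Iio b by simp; omega)
      (by omega)
    omega

lemma two_pow_succ_mul (k n : ℕ) : 2 ^ (k + 1) * n = 2 ^ k * n + 2 ^ k * n := by ring

lemma thueMorsePair_lt (n k : ℕ) :
    (∀ i < 2 ^ k * n, (thueMorsePair n k).1 i < 2 ^ k * n) ∧
      ∀ i < 2 ^ k * n, (thueMorsePair n k).2 i < 2 ^ k * n := by
  induction k with
  | zero => simp [thueMorsePair]; omega
  | succ k ih =>
    rw [two_pow_succ_mul]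
    exact ⟨directSum_lt ih.1 ih.2, directSum_lt ih.2 ih.1⟩

lemma thueMorsePair_injOn (n k : ℕ) :
    Set.InjOn (thueMorsePair n k).1 (Set.Iio (2 ^ k * n)) ∧
      Set.InjOn (thueMorsePair n k).2 (Set.Iio (2 ^ k * n)) := by
  induction k with
  | zero =>
    refine ⟨fun i hi j hj hij => ?_, Function.injective_id.injOn⟩
    simp only [thueMorsePair, pow_zero, one_mul, Set.mem_Iio] at hi hj hij
    omega
  | succ k ih =>
    rw [two_pow_succ_mul]
    have h := thueMorsePair_lt n k
    exact ⟨directSum_injOn h.1 ih.1 ih.2, directSum_injOn h.2 ih.2 ih.1⟩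

lemma patternCount_thueMorsePair (n k : ℕ) : ∀ r ≤ k + 1, ∀ p,
    patternCount r p (2 ^ k * n) (thueMorsePair n k).1 =
      patternCount r p (2 ^ k * n) (thueMorsePair n k).2 := by
  induction k with
  | zero =>
    intro r hr p
    match r with
    | 0 => simp only [patternCount_zero]
    | 1 => simp only [patternCount_one]
  | succ k ih =>
    intro r hr p
    rw [two_pow_succ_mul]
    have h := thueMorsePair_lt n k
    exact patternCount_directSum_comm h.1 h.2 ih hr p

lemma sq_le_patternCount_decreasing (q : ℕ) :
    q ^ 2 ≤ patternCount 2 swapPattern (2 * q) (fun i => 2 * q - 1 - i) := by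
  have hcard : q ^ 2 = Nat.card (Fin q × Fin q) := by simp [sq]
  rw [hcard, patternCount]
  refine Nat.card_le_card_of_injective (fun x =>
    ⟨![⟨x.1, by omega⟩, ⟨q + x.2, by omega⟩], ?_, ?_⟩) ?_
  · intro i j hij
    fin_cases i <;> fin_cases j <;> simp at hij ⊢
    omega
  · intro i j
    fin_cases i <;> fin_cases j <;> simp [swapPattern] <;> omega
  · rintro ⟨a, b⟩ ⟨c, d⟩ h
    have h0 := congrFun (congrArg Subtype.val h) 0
    have h1 := congrFun (congrArg Subtype.val h) 1
    simp only [Matrix.cons_val_zero, Matrix.cons_val_one, Fin.mk.injEq] at h0 h1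
    ext <;> simp <;> omega

lemma patternCount_increasing (n : ℕ) : patternCount 2 swapPattern n id = 0 := by
  have : IsEmpty {f : Fin 2 → Fin n // IsPatternOcc 2 swapPattern n id f} := by
    refine ⟨fun ⟨f, hf, h⟩ => ?_⟩
    have h1 := h 0 1
    have h2 := hf (show (0 : Fin 2) < 1 by decide)
    simp [swapPattern] at h1
    exact absurd h2 (not_lt_of_ge h1)
  exact Nat.card_of_isEmpty

lemma pow_le_patternCount_thueMorsePair_sub (q k : ℕ) :
    ((q : ℤ) ^ (k + 2)) ≤
      (patternCount (k + 2) swapPattern (2 ^ k * (2 * q)) (thueMorsePair (2 * q) k).1 : ℤ) -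
        patternCount (k + 2) swapPattern (2 ^ k * (2 * q)) (thueMorsePair (2 * q) k).2 := by
  induction k with
  | zero =>
    simp only [thueMorsePair, pow_zero, one_mul, zero_add, patternCount_increasing]
    simpa using mod_cast sq_le_patternCount_decreasing q
  | succ k ih =>
    have h := thueMorsePair_lt (2 * q) k
    rw [two_pow_succ_mul, thueMorsePair, patternCount_swapPattern_directSum_sub (by omega) h.1 h.2
      (patternCount_thueMorsePair (2 * q) k), pow_succ]
    have hq : (q : ℤ) ≤ ((2 ^ k * (2 * q) : ℕ) : ℤ) := by
      have : 1 ≤ 2 ^ k := Nat.one_le_two_pow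
      exact_mod_cast (by nlinarith : q ≤ 2 ^ k * (2 * q))
    exact mul_le_mul ih hq (by positivity) (le_trans (by positivity) ih)

lemma lam_eq_patternCount {k n : ℕ} (τ : Equiv.Perm (Fin k)) (σ : Equiv.Perm (Fin n))
    {p s : ℕ → ℕ} (hp : ∀ i, (τ i : ℕ) = p i) (hs : ∀ i, (σ i : ℕ) = s i) :
    lam τ σ = patternCount k p n s := by
  simp only [lam, patternCount, IsOcc, IsPatternOcc, Fin.lt_def (a := τ _), Fin.lt_def (a := σ _),
    hp, hs]

lemma exists_perm_of_injOn {n : ℕ} {s : ℕ → ℕ} (hs : ∀ i < n, s i < n)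
    (hinj : Set.InjOn s (Set.Iio n)) : ∃ σ : Equiv.Perm (Fin n), ∀ i, (σ i : ℕ) = s i := by
  have h : Function.Injective fun i : Fin n => (⟨s i, hs i i.2⟩ : Fin n) := fun i j hij =>
    Fin.ext (hinj i.2 j.2 (Fin.mk.inj hij))
  exact ⟨Equiv.ofBijective _ (Finite.injective_iff_bijective.mp h), fun i => rfl⟩

lemma exists_nat_extension {k : ℕ} (τ : Equiv.Perm (Fin k)) :
    ∃ p : ℕ → ℕ, ∀ i, (τ i : ℕ) = p i :=
  ⟨fun i => if h : i < k then τ ⟨i, h⟩ else 0, fun i => by simp⟩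

lemma lam_le_choose {k n : ℕ} (τ : Equiv.Perm (Fin k)) (σ : Equiv.Perm (Fin n)) :
    lam τ σ ≤ n.choose k := by
  have hcard : n.choose k = Nat.card {s : Finset (Fin n) // s.card = k} := by
    simp
  rw [lam, hcard]
  refine Nat.card_le_card_of_injective (fun f => ⟨Finset.univ.image f.1, ?_⟩) ?_
  · rw [Finset.card_image_of_injective _ f.2.1.injective, Finset.card_univ, Fintype.card_fin]
  · intro f g hfg
    have h := congrArg (fun s : Finset (Fin n) => (s : Set (Fin n))) (congrArg Subtype.val hfg)
    simp only [Finset.coe_image, Finset.coe_univ, Set.image_univ] at h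
    exact Subtype.ext ((StrictMono.range_inj f.2.1 g.2.1).mp h)

lemma subDens_mem_Icc (τ σ : Perms) : subDens τ σ ∈ Set.Icc (0 : ℝ) 1 := by
  unfold subDens dens
  split_ifs
  · exact ⟨by positivity, div_le_one_of_le₀ (mod_cast lam_le_choose τ.2 σ.2) (by positivity)⟩
  · simp

lemma abs_subDens_sub_le_one (τ σ π : Perms) : |subDens τ σ - subDens τ π| ≤ 1 := by
  have h1 := subDens_mem_Icc τ σ
  have h2 := subDens_mem_Icc τ π
  exact abs_sub_le_iff.mpr ⟨by linarith [h1.2, h2.1], by linarith [h1.1, h2.2]⟩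

/-- The permutation `2 1 3 4 ⋯ (k + 2)`. -/
def swapPerm (k : ℕ) : Perms := ⟨k + 2, Equiv.swap 0 1⟩

lemma swapPerm_apply (k : ℕ) (i : Fin (k + 2)) : ((swapPerm k).2 i : ℕ) = swapPattern i := by
  change ((Equiv.swap (0 : Fin (k + 2)) 1 i : Fin (k + 2)) : ℕ) = swapPattern i
  simp only [swapPattern, Equiv.swap_apply_def, Fin.ext_iff, Fin.val_zero, Fin.val_one]
  split_ifs <;> simp

/-- A lower bound for the difference of the densities of `swapPerm k` in the two permutations
obtained from `thueMorsePair`. -/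
noncomputable def densGap (k : ℕ) : ℝ := 1 / (2 ^ (k + 1)) ^ (k + 2)

lemma densGap_pos (k : ℕ) : 0 < densGap k := by unfold densGap; positivity

lemma densGap_le_one (k : ℕ) : densGap k ≤ 1 := by
  unfold densGap
  exact div_le_one_of_le₀ (one_le_pow₀ (one_le_pow₀ one_le_two)) (by positivity)

/-- There are arbitrarily large pairs of permutations that agree on all densities of patterns of
order at most `k + 1` but differ substantially in the density of `swapPerm k`. -/
lemma exists_perms_densGap_le (k : ℕ) {q : ℕ} (hq : 1 ≤ q) : ∃ σ π : Perms, q ≤ σ.1 ∧ q ≤ π.1 ∧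
    (∀ τ : Perms, τ.1 ≤ k + 1 → subDens τ σ = subDens τ π) ∧
      densGap k ≤ subDens (swapPerm k) σ - subDens (swapPerm k) π := by
  have hlt := thueMorsePair_lt (2 * q) k
  have hinj := thueMorsePair_injOn (2 * q) k
  obtain ⟨σ, hσ⟩ := exists_perm_of_injOn hlt.1 hinj.1
  obtain ⟨π, hπ⟩ := exists_perm_of_injOn hlt.2 hinj.2
  have hpow : 2 ^ k * (2 * q) = 2 ^ (k + 1) * q := by ring
  have hN : q ≤ 2 ^ k * (2 * q) := by
    rw [hpow]
    exact Nat.le_mul_of_pos_left q (by positivity)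
  refine ⟨⟨_, σ⟩, ⟨_, π⟩, hN, hN, fun τ hτ => ?_, ?_⟩
  · obtain ⟨p, hp⟩ := exists_nat_extension τ.2
    simp only [subDens, dens]
    rw [lam_eq_patternCount τ.2 σ hp hσ, lam_eq_patternCount τ.2 π hp hπ,
      patternCount_thueMorsePair (2 * q) k τ.1 hτ p]
  · have hk : k + 2 ≤ 2 ^ k * (2 * q) := by
      have h1 : k + 1 < 2 ^ (k + 1) := Nat.lt_two_pow_self
      rw [hpow]
      nlinarith
    have hgap := pow_le_patternCount_thueMorsePair_sub q k
    have hgap' : (q : ℝ) ^ (k + 2) ≤ (lam (swapPerm k).2 σ : ℝ) - lam (swapPerm k).2 π := by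
      rw [lam_eq_patternCount (swapPerm k).2 σ (swapPerm_apply k) hσ,
        lam_eq_patternCount (swapPerm k).2 π (swapPerm_apply k) hπ]
      exact_mod_cast hgap
    have hchoose : ((2 ^ k * (2 * q)).choose (k + 2) : ℝ) ≤
        (2 ^ (k + 1)) ^ (k + 2) * (q : ℝ) ^ (k + 2) := by
      rw [← mul_pow, hpow]
      exact_mod_cast Nat.choose_le_pow (2 ^ (k + 1) * q) (k + 2)
    have hchoose_pos : (0 : ℝ) < ((2 ^ k * (2 * q)).choose (k + 2) : ℝ) :=
      mod_cast Nat.choose_pos hk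
    have heq : ∀ ρ : Equiv.Perm (Fin (2 ^ k * (2 * q))), subDens (swapPerm k) ⟨_, ρ⟩ =
        (lam (swapPerm k).2 ρ : ℝ) / ((2 ^ k * (2 * q)).choose (k + 2) : ℝ) := fun ρ => if_pos hk
    rw [heq, heq, ← sub_div, densGap, le_div_iff₀ hchoose_pos, one_div,
      inv_mul_le_iff₀ (by positivity)]
    exact hchoose.trans (mul_le_mul_of_nonneg_left hgap' (by positivity))

/-- Rapidly decreasing weights: the total weight after `k` is small compared to
`weight k * densGap k`. -/
noncomputable def weight : ℕ → ℝ
  | 0 => 1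
  | k + 1 => weight k * densGap k / 4

lemma weight_pos (k : ℕ) : 0 < weight k := by
  induction k with
  | zero => exact one_pos
  | succ k ih =>
    have := densGap_pos k
    rw [weight]
    positivity

lemma weight_add_le (i k : ℕ) : weight (i + k) ≤ weight k * (1 / 4) ^ i := by
  induction i with
  | zero => simp
  | succ i ih =>
    rw [Nat.succ_add, weight, pow_succ]
    have := mul_le_of_le_one_right (weight_pos (i + k)).le (densGap_le_one (i + k))
    linarith

lemma hasSum_weight_mul_geometric (k : ℕ) :
    HasSum (fun i => weight k * (1 / 4 : ℝ) ^ i) (weight k * (4 / 3)) := by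
  have h := (hasSum_geometric_of_lt_one (r := (1 / 4 : ℝ)) (by norm_num) (by norm_num)).mul_left
    (weight k)
  rwa [show (1 - 1 / 4 : ℝ)⁻¹ = 4 / 3 by norm_num] at h

lemma abs_weight_mul_le {x : ℕ → ℝ} (hx : ∀ i, |x i| ≤ 1) (i k : ℕ) :
    ‖weight (i + k) * x (i + k)‖ ≤ weight k * (1 / 4) ^ i := by
  rw [Real.norm_eq_abs, abs_mul, abs_of_pos (weight_pos _)]
  exact (mul_le_of_le_one_right (weight_pos _).le (hx _)).trans (weight_add_le i k)

lemma summable_weight_mul {x : ℕ → ℝ} (hx : ∀ i, |x i| ≤ 1) :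
    Summable fun i => weight i * x i :=
  Summable.of_norm_bounded (hasSum_weight_mul_geometric 0).summable
    fun i => abs_weight_mul_le hx i 0

lemma abs_tsum_weight_sub_sum_le {x : ℕ → ℝ} (hx : ∀ i, |x i| ≤ 1) (k : ℕ) :
    |∑' i, weight i * x i - ∑ i ∈ Finset.range k, weight i * x i| ≤ weight k * (4 / 3) := by
  rw [← (summable_weight_mul hx).sum_add_tsum_nat_add k, add_sub_cancel_left]
  exact tsum_of_norm_bounded (hasSum_weight_mul_geometric k) fun i => abs_weight_mul_le hx i k

/-- The weighted sum of the densities of the permutations `swapPerm k`. -/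
noncomputable def swapParameter (σ : Perms) : ℝ := ∑' k, weight k * subDens (swapPerm k) σ

lemma abs_subDens_le_one (τ σ : Perms) : |subDens τ σ| ≤ 1 := by
  have h := subDens_mem_Icc τ σ
  rw [abs_of_nonneg h.1]
  exact h.2

lemma swapParameter_sub (σ π : Perms) : swapParameter σ - swapParameter π =
    ∑' k, weight k * (subDens (swapPerm k) σ - subDens (swapPerm k) π) := by
  rw [swapParameter, swapParameter, ← Summable.tsum_sub
    (summable_weight_mul fun k => abs_subDens_le_one (swapPerm k) σ)
    (summable_weight_mul fun k => abs_subDens_le_one (swapPerm k) π)]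
  simp only [mul_sub]

lemma abs_swapParameter_le (σ : Perms) : |swapParameter σ| ≤ 4 / 3 := by
  have h := abs_tsum_weight_sub_sum_le (fun k => abs_subDens_le_one (swapPerm k) σ) 0
  simpa [weight, swapParameter] using h

lemma abs_swapParameter_sub_sub_sum_le (σ π : Perms) (k : ℕ) :
    |swapParameter σ - swapParameter π - ∑ i ∈ Finset.range k,
      weight i * (subDens (swapPerm i) σ - subDens (swapPerm i) π)| ≤ weight k * (4 / 3) := by
  rw [swapParameter_sub]
  exact abs_tsum_weight_sub_sum_le (fun i => abs_subDens_sub_le_one (swapPerm i) σ π) k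

lemma finitelyApproximable_swapParameter : FinitelyApproximable swapParameter := by
  intro ε hε
  obtain ⟨K, hK⟩ := exists_pow_lt_of_lt_one (show 0 < ε / 4 by positivity)
    (show (1 / 4 : ℝ) < 1 by norm_num)
  refine ⟨ε / 4, by positivity, 0, (Finset.range K).image swapPerm, fun σ π _ _ h => ?_⟩
  have htail := abs_swapParameter_sub_sub_sum_le σ π K
  have hwK : weight K ≤ (1 / 4) ^ K := by simpa [weight] using weight_add_le K 0
  have hsum : |∑ i ∈ Finset.range K,
      weight i * (subDens (swapPerm i) σ - subDens (swapPerm i) π)| ≤ 4 / 3 * (ε / 4) := by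
    calc _ ≤ ∑ i ∈ Finset.range K, (weight 0 * (1 / 4 : ℝ) ^ i) * (ε / 4) := by
          refine (Finset.abs_sum_le_sum_abs _ _).trans (Finset.sum_le_sum fun i hi => ?_)
          rw [abs_mul, abs_of_pos (weight_pos i)]
          have hw : weight i ≤ weight 0 * (1 / 4) ^ i := weight_add_le i 0
          exact mul_le_mul hw (h _ (Finset.mem_image_of_mem _ hi)).le (abs_nonneg _)
            ((weight_pos i).le.trans hw)
      _ ≤ _ := by
          rw [← Finset.sum_mul]
          refine mul_le_mul_of_nonneg_right ?_ (by positivity)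
          have hgeom := sum_le_hasSum (Finset.range K)
            (fun i _ => mul_nonneg (weight_pos 0).le (by positivity))
            (hasSum_weight_mul_geometric 0)
          simpa [weight] using hgeom
  rw [abs_le] at htail hsum
  rw [abs_lt]
  constructor <;> linarith [htail.1, htail.2, hsum.1, hsum.2]

lemma not_finitelyForcible_swapParameter : ¬ FinitelyForcible swapParameter := by
  rintro ⟨A, hA⟩
  set k := A.sup fun τ => τ.1
  have hpos : 0 < weight k * densGap k := mul_pos (weight_pos k) (densGap_pos k)
  obtain ⟨n₀, δ, hδ, H⟩ := hA (weight k * densGap k / 2) (by positivity)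
  obtain ⟨σ, π, hσ, hπ, heq, hgap⟩ := exists_perms_densGap_le k (q := n₀ + 1) (by omega)
  have hclose := H σ π (by omega) (by omega) fun τ hτ => by
    have hle : τ.1 ≤ k := Finset.le_sup (f := fun τ : Perms => τ.1) hτ
    rwa [heq τ (by omega), sub_self, abs_zero]
  have htail := abs_swapParameter_sub_sub_sum_le σ π (k + 1)
  have hzero : ∀ i ∈ Finset.range k,
      weight i * (subDens (swapPerm i) σ - subDens (swapPerm i) π) = 0 := fun i hi => by
    have hi' : i + 2 ≤ k + 1 := by have := Finset.mem_range.mp hi; omega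
    rw [heq (swapPerm i) hi', sub_self, mul_zero]
  rw [Finset.sum_range_succ, Finset.sum_eq_zero hzero, zero_add, weight] at htail
  have hmul := mul_le_mul_of_nonneg_left hgap (weight_pos k).le
  rw [abs_le] at htail
  rw [abs_lt] at hclose
  linarith [htail.1, hclose.2]

/-- **Theorem 2.** There exists a bounded permutation parameter that is finitely
approximable but not finitely forcible. -/
theorem exists_approximable_not_forcible :
    ∃ f : Perms → ℝ, (∃ M : ℝ, ∀ σ : Perms, |f σ| ≤ M) ∧
      FinitelyApproximable f ∧ ¬ FinitelyForcible f := by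
  exact ⟨swapParameter, ⟨4 / 3, abs_swapParameter_le⟩, finitelyApproximable_swapParameter,
    not_finitelyForcible_swapParameter⟩
end

section
/- For every finite set of permutations 𝒜 = {τ_1,…,τ_k}, there exist a permutation τ and permutons μ and μ' such that t(τ_i,μ) = t(τ_i,μ') for every i ∈ [k] and t(τ,μ) ≠ t(τ,μ'). -/
open Filter Topology

open MeasureTheory

/-- A permuton: a Borel probability measure on `[0,1]²` (modeled as a measure on
`ℝ × ℝ` giving full mass to the unit square) with uniform marginals. -/
structure Permuton where
  μ : Measure (ℝ × ℝ)
  prob : IsProbabilityMeasure μ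
  margX : ∀ a b : ℝ, 0 ≤ a → a ≤ b → b ≤ 1 →
    μ (Set.Icc a b ×ˢ Set.Icc (0 : ℝ) 1) = ENNReal.ofReal (b - a)
  margY : ∀ a b : ℝ, 0 ≤ a → a ≤ b → b ≤ 1 →
    μ (Set.Icc (0 : ℝ) 1 ×ˢ Set.Icc a b) = ENNReal.ofReal (b - a)

/-- The density `t(τ,P)` of a pattern `τ` of order `k` in a permuton `P`:
`k!` times the `μ^{⊗k}`-measure of the set of `k`-tuples of points whose first
coordinates are increasing and whose second coordinates follow the pattern `τ`. -/
noncomputable def pdens {k : ℕ} (τ : Equiv.Perm (Fin k)) (P : Permuton) : ℝ :=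
  haveI : IsProbabilityMeasure P.μ := P.prob
  (k.factorial : ℝ) *
    (Measure.pi (fun _ : Fin k => P.μ)
      {g : Fin k → ℝ × ℝ |
        (∀ i j : Fin k, i < j → (g i).1 < (g j).1) ∧
        (∀ i j : Fin k, (g i).2 < (g j).2 ↔ τ i < τ j)}).toReal

/-- Density of a permutation of arbitrary order in a permuton. -/
noncomputable def permutonDens (τ : Perms) (P : Permuton) : ℝ := pdens τ.2 P

/-- Factorials outgrow any fixed power of a polynomial. -/
theorem exists_pow_lt_factorial (K L : ℕ) :
    ∃ m : ℕ, 0 < m ∧ ((m * 2) ^ K + 1) ^ L < m.factorial := by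
  have hpow := (isLittleO_pow_const_const_pow_of_one_lt (R := ℝ) ((K + 1) * L) (r := 2)
    (by norm_num)).bound (c := ((4 : ℝ) ^ ((K + 1) * L))⁻¹) (by positivity)
  have hfact := (FloorSemiring.tendsto_pow_div_factorial_atTop (2 : ℝ)).eventually
    (gt_mem_nhds one_pos)
  obtain ⟨m, ⟨hpow, hfact⟩, hm⟩ := ((hpow.and hfact).and (eventually_gt_atTop 0)).exists
  refine ⟨m, hm, ?_⟩
  rw [div_lt_one (by positivity)] at hfact
  simp only [norm_pow, Real.norm_natCast, Real.norm_ofNat] at hpow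
  rw [inv_mul_eq_div, le_div_iff₀' (by positivity), ← mul_pow] at hpow
  have hpoly : ((m * 2) ^ K + 1) ^ L ≤ (4 * m) ^ ((K + 1) * L) := by
    rw [pow_mul]
    refine Nat.pow_le_pow_left ?_ L
    calc (m * 2) ^ K + 1 ≤ (4 * m) ^ K + (4 * m) ^ K :=
          add_le_add (Nat.pow_le_pow_left (by lia) K) (Nat.one_le_pow _ _ (by lia))
      _ = (4 * m) ^ K * 2 := by ring
      _ ≤ (4 * m) ^ (K + 1) := by
          rw [pow_succ]
          exact Nat.mul_le_mul_left _ (by lia)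
  exact_mod_cast (Nat.cast_le (α := ℝ).2 hpoly).trans_lt
    (lt_of_le_of_lt (by exact_mod_cast hpow) hfact)

namespace BlockPermuton

/-- The point of the `b`-th of `n` equal subintervals of `[0,1)` at relative position `fract u`. -/
noncomputable def blockPoint (n : ℕ) (w : Fin n × ℝ) : ℝ := ((w.1 : ℝ) + Int.fract w.2) / n

theorem blockPoint_lt_iff {n : ℕ} (b c : Fin n) (u v : ℝ) :
    blockPoint n (b, u) < blockPoint n (c, v) ↔
      b < c ∨ (¬ b < c ∧ ¬ c < b) ∧ Int.fract u < Int.fract v := by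
  have hn : (0 : ℝ) < n := by exact_mod_cast b.pos
  have hu := Int.fract_nonneg u
  have hu' := Int.fract_lt_one u
  have hv := Int.fract_nonneg v
  have hv' := Int.fract_lt_one v
  simp only [blockPoint]
  rw [div_lt_div_iff_of_pos_right hn]
  rcases lt_trichotomy b c with h | h | h
  · have : (b : ℝ) + 1 ≤ c := by exact_mod_cast h
    simp only [h, true_or, iff_true]
    linarith
  · subst h
    simp
  · have : (c : ℝ) + 1 ≤ b := by exact_mod_cast h
    simp only [h, h.not_gt, not_true, and_false, false_and, or_false, iff_false, not_lt]
    linarith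

theorem blockPoint_mem_Icc {n : ℕ} (w : Fin n × ℝ) : blockPoint n w ∈ Set.Icc (0 : ℝ) 1 := by
  have hn : (0 : ℝ) < n := by exact_mod_cast w.1.pos
  have hu := Int.fract_nonneg w.2
  have hu' := Int.fract_lt_one w.2
  have hb : (w.1 : ℝ) + 1 ≤ n := by exact_mod_cast w.1.isLt
  refine ⟨by unfold blockPoint; positivity, ?_⟩
  rw [blockPoint, div_le_one hn]
  linarith

theorem measurable_blockPoint (n : ℕ) : Measurable (blockPoint n) := by
  unfold blockPoint
  have : Measurable fun w : Fin n × ℝ => (w.1 : ℝ) :=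
    (measurable_from_top (f := fun b : Fin n => (b : ℝ))).comp measurable_fst
  exact (this.add (measurable_fract.comp measurable_snd)).div_const _

/-- The uniform distribution on `Fin n`. -/
noncomputable def uniformFin (n : ℕ) : Measure (Fin n) := (n : ENNReal)⁻¹ • Measure.count

/-- The uniform distribution on `[0,1)`. -/
noncomputable def uniformIco : Measure ℝ := volume.restrict (Set.Ico 0 1)

instance : IsProbabilityMeasure uniformIco := ⟨by simp [uniformIco]⟩

instance (n : ℕ) [NeZero n] : IsProbabilityMeasure (uniformFin n) :=
  ⟨by simp [uniformFin, Measure.count_univ, ENNReal.inv_mul_cancel, NeZero.ne n]⟩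

theorem uniformFin_singleton {n : ℕ} (b : Fin n) : uniformFin n {b} = (n : ENNReal)⁻¹ := by
  simp [uniformFin]

theorem sum_volume_Ico_inter (S : Set ℝ) (hS : MeasurableSet S) (n : ℕ) :
    ∑ b : Fin n, volume (Set.Ico (b : ℝ) (b + 1) ∩ S) = volume (Set.Ico (0 : ℝ) n ∩ S) := by
  induction n with
  | zero => simp
  | succ n ih =>
    rw [Fin.sum_univ_castSucc]
    simp only [Fin.val_castSucc, Fin.val_last]
    rw [ih, ← measure_union _ (measurableSet_Ico.inter hS), ← Set.union_inter_distrib_right,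
      Set.Ico_union_Ico_eq_Ico (by positivity) (by linarith), Nat.cast_succ]
    exact (Set.Ico_disjoint_Ico_same.mono Set.inter_subset_left Set.inter_subset_left)

theorem uniformIco_blockPoint {n : ℕ} (b : Fin n) (x y : ℝ) :
    uniformIco {u | blockPoint n (b, u) ∈ Set.Icc x y} =
      volume (Set.Ico (b : ℝ) (b + 1) ∩ Set.Icc (n * x) (n * y)) := by
  have hn : (0 : ℝ) < n := by exact_mod_cast b.pos
  rw [← measure_preimage_add volume (b : ℝ), uniformIco, Measure.restrict_apply']
  · congr 1
    ext u
    simp only [blockPoint, Set.mem_inter_iff, Set.mem_ofPred_eq, Set.mem_Icc, Set.mem_Ico,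
      Set.mem_preimage, div_le_iff₀' hn, le_div_iff₀' hn]
    constructor
    · rintro ⟨h, hu⟩
      rw [Int.fract_eq_self.2 hu] at h
      exact ⟨⟨by linarith, by linarith⟩, h⟩
    · rintro ⟨hu, h⟩
      have hu : 0 ≤ u ∧ u < 1 := ⟨by linarith, by linarith⟩
      rw [Int.fract_eq_self.2 hu]
      exact ⟨h, hu⟩
  · exact measurableSet_Ico

theorem sum_uniformIco_blockPoint {n : ℕ} [NeZero n] {x y : ℝ} (hx : 0 ≤ x) (hy : y ≤ 1) :
    ∑ b : Fin n, uniformIco {u | blockPoint n (b, u) ∈ Set.Icc x y} =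
      n * ENNReal.ofReal (y - x) := by
  have hn : (0 : ℝ) < n := by exact_mod_cast Nat.pos_of_ne_zero (NeZero.ne n)
  simp_rw [uniformIco_blockPoint]
  have hae : (Set.Ico (0 : ℝ) n ∩ Set.Icc (n * x) (n * y) : Set ℝ) =ᵐ[volume]
      (Set.Icc (0 : ℝ) n ∩ Set.Icc (n * x) (n * y) : Set ℝ) :=
    Ico_ae_eq_Icc.inter (ae_eq_refl _)
  rw [sum_volume_Ico_inter _ measurableSet_Icc, measure_congr hae, Set.Icc_inter_Icc, Real.volume_Icc,
    sup_of_le_right (by positivity), inf_of_le_right (by nlinarith), ← mul_sub,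
    ENNReal.ofReal_mul hn.le, ENNReal.ofReal_natCast]

theorem prod_blockPoint_perm {n : ℕ} [NeZero n] (σ : Equiv.Perm (Fin n)) {x y : ℝ}
    (hx : 0 ≤ x) (hy : y ≤ 1) :
    (uniformFin n).prod uniformIco {w | blockPoint n (σ w.1, w.2) ∈ Set.Icc x y} =
      ENNReal.ofReal (y - x) := by
  have hmeas : Measurable fun w : Fin n × ℝ => blockPoint n (σ w.1, w.2) :=
    (measurable_blockPoint n).comp
      (((measurable_of_countable σ).comp measurable_fst).prodMk measurable_snd)
  have hset : MeasurableSet {w : Fin n × ℝ | blockPoint n (σ w.1, w.2) ∈ Set.Icc x y} :=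
    hmeas measurableSet_Icc
  rw [Measure.prod_apply hset, lintegral_fintype]
  simp only [uniformFin_singleton, ← Finset.sum_mul]
  have := (Equiv.sum_comp σ fun b => uniformIco {u | blockPoint n (b, u) ∈ Set.Icc x y}).trans
    (sum_uniformIco_blockPoint hx hy)
  simp only [Set.preimage, Set.mem_ofPred_eq] at this ⊢
  rw [this, mul_comm, ← mul_assoc, ENNReal.inv_mul_cancel (by simpa using NeZero.ne n) (by simp),
    one_mul]

/-- The point of the inflation of the diagram of `σ` by increasing segments with parameters `w`. -/
noncomputable def diagramPoint {n : ℕ} (σ : Equiv.Perm (Fin n)) (w : Fin n × ℝ) : ℝ × ℝ :=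
  (blockPoint n w, blockPoint n (σ w.1, w.2))

theorem measurable_diagramPoint {n : ℕ} (σ : Equiv.Perm (Fin n)) :
    Measurable (diagramPoint σ) :=
  (measurable_blockPoint n).prodMk ((measurable_blockPoint n).comp
    (((measurable_of_countable σ).comp measurable_fst).prodMk measurable_snd))

/-- The permuton obtained from the diagram of `σ` by replacing each point with an increasing
segment. -/
noncomputable def ofPerm {n : ℕ} [NeZero n] (σ : Equiv.Perm (Fin n)) : Permuton where
  μ := ((uniformFin n).prod uniformIco).map (diagramPoint σ)
  prob := Measure.isProbabilityMeasure_map (measurable_diagramPoint σ).aemeasurable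
  margX x y hx _ hy := by
    rw [Measure.map_apply (measurable_diagramPoint σ) (measurableSet_Icc.prod measurableSet_Icc),
      ← prod_blockPoint_perm (1 : Equiv.Perm (Fin n)) hx hy]
    congr 1
    ext w
    simp only [diagramPoint, Set.mem_preimage, Set.mem_prod, blockPoint_mem_Icc, and_true]
    rfl
  margY x y hx _ hy := by
    rw [Measure.map_apply (measurable_diagramPoint σ) (measurableSet_Icc.prod measurableSet_Icc),
      ← prod_blockPoint_perm σ hx hy]
    congr 1
    ext w
    simp only [diagramPoint, Set.mem_preimage, Set.mem_prod, blockPoint_mem_Icc, true_and]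
    rfl

/-- The tuples of points that induce the pattern `τ`. -/
def patternSet {k : ℕ} (τ : Equiv.Perm (Fin k)) : Set (Fin k → ℝ × ℝ) :=
  {g | (∀ i j : Fin k, i < j → (g i).1 < (g j).1) ∧
    (∀ i j : Fin k, (g i).2 < (g j).2 ↔ τ i < τ j)}

theorem measurableSet_patternSet {k : ℕ} (τ : Equiv.Perm (Fin k)) :
    MeasurableSet (patternSet τ) := by
  have hfst (i j : Fin k) : MeasurableSet {g : Fin k → ℝ × ℝ | (g i).1 < (g j).1} :=
    measurableSet_lt (by fun_prop) (by fun_prop)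
  have hsnd (i j : Fin k) : MeasurableSet {g : Fin k → ℝ × ℝ | (g i).2 < (g j).2} :=
    measurableSet_lt (by fun_prop) (by fun_prop)
  have heq : patternSet τ = (⋂ (i) (j) (_ : i < j), {g | (g i).1 < (g j).1}) ∩
      ⋂ (i) (j), {g | (g i).2 < (g j).2 ↔ τ i < τ j} := by
    ext g
    simp [patternSet]
  rw [heq]
  refine MeasurableSet.inter ?_ ?_
  · exact .iInter fun i => .iInter fun j => .iInter fun _ => hfst i j
  · refine MeasurableSet.iInter fun i => .iInter fun j => ?_
    by_cases h : τ i < τ j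
    · simpa [h] using hsnd i j
    · simp only [h, iff_false]
      exact (hsnd i j).compl

/-- The tuples of block parameters whose points induce the pattern `τ`. -/
def parameterSet {k n : ℕ} (τ : Equiv.Perm (Fin k)) (σ : Equiv.Perm (Fin n)) :
    Set (Fin k → Fin n × ℝ) :=
  (fun w i => diagramPoint σ (w i)) ⁻¹' patternSet τ

theorem measurable_diagramPoint_pi {n : ℕ} (k : ℕ) (σ : Equiv.Perm (Fin n)) :
    Measurable fun (w : Fin k → Fin n × ℝ) i => diagramPoint σ (w i) :=
  measurable_pi_lambda _ fun i => (measurable_diagramPoint σ).comp (measurable_pi_apply i)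

theorem pdens_ofPerm {k n : ℕ} [NeZero n] (τ : Equiv.Perm (Fin k)) (σ : Equiv.Perm (Fin n)) :
    pdens τ (ofPerm σ) = (k.factorial : ℝ) *
      (Measure.pi (fun _ : Fin k => (uniformFin n).prod uniformIco) (parameterSet τ σ)).toReal := by
  have : IsProbabilityMeasure (((uniformFin n).prod uniformIco).map (diagramPoint σ)) :=
    Measure.isProbabilityMeasure_map (measurable_diagramPoint σ).aemeasurable
  change (k.factorial : ℝ) * (Measure.pi
    (fun _ : Fin k => ((uniformFin n).prod uniformIco).map (diagramPoint σ))
      (patternSet τ)).toReal = _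
  rw [← Measure.pi_map_pi fun _ => (measurable_diagramPoint σ).aemeasurable,
    Measure.map_apply (measurable_diagramPoint_pi k σ) (measurableSet_patternSet τ)]
  rfl

/-- The order relations among the horizontal and the vertical blocks of a tuple. -/
def orderType {k n : ℕ} (σ : Equiv.Perm (Fin n)) (b : Fin k → Fin n) :
    Fin k → Fin k → Prop × Prop :=
  fun i j => (b i < b j, σ (b i) < σ (b j))

/-- The positions inside the blocks that induce `τ` in blocks of order type `T`. -/
def positionSet {k : ℕ} (τ : Equiv.Perm (Fin k)) (T : Fin k → Fin k → Prop × Prop) :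
    Set (Fin k → ℝ) :=
  {u | (∀ i j, i < j → (T i j).1 ∨
      (¬ (T i j).1 ∧ ¬ (T j i).1) ∧ Int.fract (u i) < Int.fract (u j)) ∧
    ∀ i j, ((T i j).2 ∨
      (¬ (T i j).2 ∧ ¬ (T j i).2) ∧ Int.fract (u i) < Int.fract (u j)) ↔ τ i < τ j}

/-- The number of tuples of blocks of a given order type. -/
noncomputable def typeCount {k n : ℕ} (σ : Equiv.Perm (Fin n))
    (T : Fin k → Fin k → Prop × Prop) : ℕ :=
  Nat.card {b : Fin k → Fin n // orderType σ b = T}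

theorem typeCount_le {k n : ℕ} (σ : Equiv.Perm (Fin n)) (T : Fin k → Fin k → Prop × Prop) :
    typeCount σ T ≤ n ^ k := by
  simpa [typeCount] using Nat.card_le_card_of_injective
    (Subtype.val : {b : Fin k → Fin n // orderType σ b = T} → _) Subtype.val_injective

theorem mem_parameterSet_iff {k n : ℕ} (τ : Equiv.Perm (Fin k)) (σ : Equiv.Perm (Fin n))
    (b : Fin k → Fin n) (u : Fin k → ℝ) :
    (fun i => (b i, u i)) ∈ parameterSet τ σ ↔ u ∈ positionSet τ (orderType σ b) := by
  simp only [parameterSet, patternSet, positionSet, orderType, diagramPoint, Set.mem_preimage,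
    Set.mem_ofPred_eq, blockPoint_lt_iff]

open Classical in
theorem pi_parameterSet {k n : ℕ} [NeZero n] (τ : Equiv.Perm (Fin k)) (σ : Equiv.Perm (Fin n)) :
    Measure.pi (fun _ : Fin k => (uniformFin n).prod uniformIco) (parameterSet τ σ) =
      ∑ T, typeCount σ T * Measure.pi (fun _ : Fin k => uniformIco) (positionSet τ T) *
        (n : ENNReal)⁻¹ ^ k := by
  have hmeas : MeasurableSet (parameterSet τ σ) :=
    measurable_diagramPoint_pi k σ (measurableSet_patternSet τ)
  rw [← (measurePreserving_arrowProdEquivProdArrow (Fin n) ℝ (Fin k) (fun _ => uniformFin n)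
    fun _ => uniformIco).symm.measure_preimage_equiv, Measure.prod_apply
      ((MeasurableEquiv.arrowProdEquivProdArrow (Fin n) ℝ (Fin k)).symm.measurable hmeas),
    lintegral_fintype]
  have hsection (b : Fin k → Fin n) :
      Prod.mk b ⁻¹' ((MeasurableEquiv.arrowProdEquivProdArrow (Fin n) ℝ (Fin k)).symm ⁻¹'
        parameterSet τ σ) = positionSet τ (orderType σ b) := by
    ext u
    exact mem_parameterSet_iff τ σ b u
  simp only [hsection, Measure.pi_singleton, uniformFin_singleton, Finset.prod_const,
    Finset.card_univ, Fintype.card_fin]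
  rw [← Finset.sum_fiberwise_of_maps_to (g := orderType σ) (fun _ _ => Finset.mem_univ _)]
  refine Finset.sum_congr rfl fun T _ => ?_
  rw [Finset.sum_congr rfl fun b hb => by rw [(Finset.mem_filter.1 hb).2], Finset.sum_const,
    nsmul_eq_mul, mul_assoc, typeCount, Nat.card_eq_fintype_card, Fintype.card_subtype]

theorem pdens_ofPerm_congr {k n : ℕ} [NeZero n] (τ : Equiv.Perm (Fin k))
    {σ σ' : Equiv.Perm (Fin n)} (h : ∀ T : Fin k → Fin k → Prop × Prop,
      typeCount σ T = typeCount σ' T) :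
    pdens τ (ofPerm σ) = pdens τ (ofPerm σ') := by
  classical
  simp only [pdens_ofPerm, pi_parameterSet, h]

theorem pdens_self_ne_zero {n : ℕ} [NeZero n] (σ : Equiv.Perm (Fin n)) :
    pdens σ (ofPerm σ) ≠ 0 := by
  rw [pdens_ofPerm]
  refine mul_ne_zero (by exact_mod_cast n.factorial_ne_zero) ?_
  refine ENNReal.toReal_ne_zero.2 ⟨fun h0 => ?_, measure_ne_top _ _⟩
  have hsub : Set.univ.pi (fun i : Fin n => ({i} : Set (Fin n)) ×ˢ (Set.univ : Set ℝ)) ⊆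
      parameterSet σ σ := by
    intro w hw
    have hw' : w = fun i => (i, (w i).2) := by
      funext i
      exact Prod.ext (by simpa using hw i (Set.mem_univ i)) rfl
    rw [hw', mem_parameterSet_iff]
    refine ⟨fun i j hij => Or.inl hij, fun i j => ⟨?_, Or.inl⟩⟩
    rintro (h | ⟨⟨h, h'⟩, hlt⟩)
    · exact h
    · have : i = j := σ.injective (le_antisymm (not_lt.1 h') (not_lt.1 h))
      subst this
      exact absurd hlt (lt_irrefl _)
  have := measure_mono_null hsub h0
  rw [Measure.pi_pi] at this
  simp [Measure.prod_prod, uniformFin_singleton] at this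

/-- No two consecutive positions carry consecutive increasing values. -/
def SuccessionFree {n : ℕ} (σ : Equiv.Perm (Fin n)) : Prop :=
  ∀ i j : Fin n, (j : ℕ) = i + 1 → (σ j : ℕ) ≠ σ i + 1

theorem perm_eq_of_lt_iff {n : ℕ} {σ σ' : Equiv.Perm (Fin n)}
    (h : ∀ i j, σ' i < σ' j → σ i < σ j) : σ = σ' := by
  have hmono : StrictMono fun i => σ (σ'.symm i) := fun i j hij =>
    h _ _ (by simpa using hij)
  ext i
  have := congrFun hmono.eq_id (σ' i)
  simp only [Equiv.symm_apply_apply, id] at this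
  rw [this]

theorem SuccessionFree.eq_of_mem_parameterSet {n : ℕ} {σ σ' : Equiv.Perm (Fin n)}
    (hσ : SuccessionFree σ) {w : Fin n → Fin n × ℝ} (hw : w ∈ parameterSet σ σ') : σ = σ' := by
  obtain ⟨hx, hy⟩ := hw
  simp only [diagramPoint] at hx hy
  have hmono : StrictMono fun i => blockPoint n (w i) := fun i j h => hx i j h
  have hle {b c : Fin n} {u v : ℝ} (h : blockPoint n (b, u) < blockPoint n (c, v)) : b ≤ c := by
    rw [blockPoint_lt_iff] at h
    rcases h with h | h
    · exact h.le
    · exact not_lt.1 h.1.2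
  have hblock : Monotone fun i => (w i).1 := by
    intro i j hij
    rcases hij.eq_or_lt with rfl | hij
    · exact le_rfl
    · exact hle (hx i j hij)
  have hinj {i j : Fin n} (hij : i < j) : (w i).1 ≠ (w j).1 := by
    intro heq
    obtain ⟨s, hs⟩ : ∃ s : Fin n, (s : ℕ) = i + 1 := ⟨⟨i + 1, by lia⟩, rfl⟩
    have his : i < s := by lia
    have heq' : (w s).1 = (w i).1 :=
      le_antisymm (heq ▸ hblock (show s ≤ j by lia)) (hblock his.le)
    have hfr (l m : Fin n) (hl : (w l).1 = (w m).1) :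
        blockPoint n (w l) < blockPoint n (w m) ↔
          blockPoint n (σ' (w l).1, (w l).2) < blockPoint n (σ' (w m).1, (w m).2) := by
      have := blockPoint_lt_iff (w l).1 (w m).1 (w l).2 (w m).2
      rw [Prod.mk.eta, Prod.mk.eta] at this
      rw [this, blockPoint_lt_iff, hl]
      simp
    have hσlt : σ i < σ s := (hy i s).1 ((hfr i s heq'.symm).1 (hx i s his))
    have hne := hσ i s hs
    obtain ⟨l, hl⟩ := σ.surjective ⟨σ i + 1, by lia⟩
    have hil : σ i < σ l := by rw [hl]; exact Nat.lt_succ_self _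
    have hls : σ l < σ s := by
      rw [hl, Fin.lt_def]
      change (σ i : ℕ) + 1 < σ s
      lia
    have hil' := (hy i l).2 hil
    have hls' := (hy l s).2 hls
    have heql : (w l).1 = (w i).1 :=
      σ'.injective (le_antisymm (by simpa [heq'] using hle hls') (hle hil'))
    have h1 : i < l := hmono.lt_iff_lt.1 ((hfr i l heql.symm).2 hil')
    have h2 : l < s := hmono.lt_iff_lt.1 ((hfr l s (heql.trans heq'.symm)).2 hls')
    lia
  have hid : (fun i => (w i).1) = id :=
    StrictMono.eq_id fun i j hij => (hblock hij.le).lt_of_ne (hinj hij)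
  refine perm_eq_of_lt_iff fun i j hij => (hy i j).1 ((blockPoint_lt_iff _ _ _ _).2 (Or.inl ?_))
  rw [show (w i).1 = i from congrFun hid i, show (w j).1 = j from congrFun hid j]
  exact hij

theorem SuccessionFree.pdens_eq_zero {n : ℕ} [NeZero n] {σ σ' : Equiv.Perm (Fin n)}
    (hσ : SuccessionFree σ) (hne : σ ≠ σ') : pdens σ (ofPerm σ') = 0 := by
  rw [pdens_ofPerm, Set.eq_empty_of_forall_notMem fun w hw =>
    hne (hσ.eq_of_mem_parameterSet hw)]
  simp

/-- The inflation of every point of `π` by a descent. -/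
def inflateDescents {m : ℕ} (π : Equiv.Perm (Fin m)) : Equiv.Perm (Fin (m * 2)) :=
  finProdFinEquiv.permCongr (π.prodCongr (Equiv.swap 0 1))

theorem inflateDescents_apply {m : ℕ} (π : Equiv.Perm (Fin m)) (p : Fin m × Fin 2) :
    inflateDescents π (finProdFinEquiv p) = finProdFinEquiv (π p.1, Equiv.swap 0 1 p.2) := by
  simp [inflateDescents, Equiv.permCongr_apply, Prod.map]

theorem inflateDescents_injective (m : ℕ) :
    Function.Injective (inflateDescents : Equiv.Perm (Fin m) → _) := by
  intro π π' h
  ext i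
  have := congrArg (fun σ => finProdFinEquiv.symm (σ (finProdFinEquiv (i, (0 : Fin 2))))) h
  simp only [inflateDescents_apply, Equiv.symm_apply_apply, Prod.mk.injEq, and_true] at this
  rw [this]

theorem successionFree_inflateDescents {m : ℕ} (π : Equiv.Perm (Fin m)) :
    SuccessionFree (inflateDescents π) := by
  intro i j hij hσ
  obtain ⟨⟨a, c⟩, rfl⟩ := finProdFinEquiv.surjective i
  obtain ⟨⟨b, d⟩, rfl⟩ := finProdFinEquiv.surjective j
  rw [inflateDescents_apply, inflateDescents_apply] at hσ
  simp only [finProdFinEquiv_apply_val] at hij hσ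
  have hinj : π a = π b → a = b := fun h => π.injective h
  fin_cases c <;> fin_cases d <;> simp at hij hσ <;> grind

end BlockPermuton

open BlockPermuton in
/-- **Lemma (independence).** For every finite set of permutations
`𝒜 = {τ_1,…,τ_k}`, there exist a permutation `τ` and permutons `Φ` and `Φ'` such
that `t(τ_i,Φ) = t(τ_i,Φ')` for every `i ∈ [k]` while `t(τ,Φ) ≠ t(τ,Φ')`. -/
theorem exists_distinguishing_pattern (k : ℕ) (A : Fin k → Perms) :
    ∃ (τ : Perms) (Φ Φ' : Permuton),
      (∀ i : Fin k, permutonDens (A i) Φ = permutonDens (A i) Φ') ∧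
      permutonDens τ Φ ≠ permutonDens τ Φ' := by
  classical
  let ι := Σ i : Fin k, (Fin (A i).1 → Fin (A i).1 → Prop × Prop)
  let K := ∑ i, (A i).1
  obtain ⟨m, hm, hlt⟩ := exists_pow_lt_factorial K (Fintype.card ι)
  have : NeZero (m * 2) := ⟨by lia⟩
  have hcount (π : Equiv.Perm (Fin m)) (p : ι) :
      typeCount (inflateDescents π) p.2 < (m * 2) ^ K + 1 :=
    Nat.lt_succ_of_le ((typeCount_le _ _).trans (Nat.pow_le_pow_right (by lia)
      (Finset.single_le_sum (f := fun i => (A i).1) (fun _ _ => Nat.zero_le _)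
        (Finset.mem_univ p.1))))
  obtain ⟨π, π', hne, heq⟩ := Fintype.exists_ne_map_eq_of_card_lt
    (fun (π : Equiv.Perm (Fin m)) (p : ι) =>
      (⟨typeCount (inflateDescents π) p.2, hcount π p⟩ : Fin ((m * 2) ^ K + 1)))
    (by simpa [Fintype.card_perm] using hlt)
  refine ⟨⟨m * 2, inflateDescents π⟩, ofPerm (inflateDescents π), ofPerm (inflateDescents π'),
    fun i => pdens_ofPerm_congr _ fun T => ?_, ?_⟩
  · exact congrArg Fin.val (congrFun heq ⟨i, T⟩)
  · have hzero := (successionFree_inflateDescents π).pdens_eq_zero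
      ((inflateDescents_injective m).ne hne)
    exact fun h => pdens_self_ne_zero _ (h.trans hzero)
end

section
/- Let τ be a non-trivial indecomposable permutation of order k, let σ be a permutation of order n ≥ k, and let p = (p_1,…,p_n) be positive reals with Σ_{i∈[n]} p_i ≤ 1. Then the step-up permuton Φ_σ^p satisfies t(τ,Φ_σ^p) = k! · Σ_{𝒫 ∈ R(τ)} Σ_{ψ ∈ Occ(τ/𝒫, σ)} Π_{i=1}^{|𝒫|} p_{ψ(i)}^{|P_i|} / |P_i|!, where the outer sum is over all τ-compressive partitions 𝒫 = (P_1,…,P_{|𝒫|}). -/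
open MeasureTheory

/-- An ordered partition `𝒫 = (P_1,…,P_ℓ)` of `[k]` into consecutive intervals,
encoded by the sequence of sizes of its parts: the `i`-th part is the interval
`[off i, off i + s i)`. -/
structure Comp (k : ℕ) where
  len : ℕ
  s : Fin len → ℕ
  pos : ∀ i, 0 < s i
  total : ∑ i, s i = k

namespace Comp

/-- The left endpoint of the `i`-th part. -/
def off {k : ℕ} (c : Comp k) (i : Fin c.len) : ℕ :=
  ∑ j ∈ Finset.univ.filter (fun j => j < i), c.s j

lemma off_add_le {k : ℕ} (c : Comp k) (i : Fin c.len) : c.off i + c.s i ≤ k := by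
  classical
  have h : c.off i + c.s i ≤ ∑ j, c.s j := by
    rw [off]
    have h1 : ∑ j ∈ Finset.univ.filter (fun j => j < i), c.s j + c.s i
        = ∑ j ∈ insert i (Finset.univ.filter (fun j => j < i)), c.s j := by
      rw [Finset.sum_insert (by simp)]
      omega
    rw [h1]
    exact Finset.sum_le_sum_of_subset (Finset.subset_univ _)
  rw [c.total] at h
  exact h

lemma off_lt {k : ℕ} (c : Comp k) (i : Fin c.len) : c.off i < k := by
  have h1 := c.off_add_le i
  have h2 := c.pos i
  omega

/-- The representative (left endpoint) of the `i`-th part, as an element of `Fin k`. -/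
def rep {k : ℕ} (c : Comp k) (i : Fin c.len) : Fin k := ⟨c.off i, c.off_lt i⟩

/-- `a` lies in the `i`-th part `P_i`. -/
def mem {k : ℕ} (c : Comp k) (i : Fin c.len) (a : Fin k) : Prop :=
  c.off i ≤ (a : ℕ) ∧ (a : ℕ) < c.off i + c.s i

end Comp

/-- `c` is a `τ`-compressive partition: on each part `P_i` the permutation `τ`
acts as a shift `a ↦ a + c_i` (equivalently, `τ a + b = τ b + a` for all
`a, b ∈ P_i`). -/
def IsCompressive {k : ℕ} (τ : Equiv.Perm (Fin k)) (c : Comp k) : Prop :=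
  ∀ i : Fin c.len, ∀ a b : Fin k, c.mem i a → c.mem i b →
    (τ a : ℕ) + (b : ℕ) = (τ b : ℕ) + (a : ℕ)

/-- `ψ` is an occurrence of the quotient permutation `τ/𝒫` (determined by the
representatives of the parts of the `τ`-compressive partition `c`) in `σ`:
a strictly increasing map matching the pattern of `τ` on the representatives. -/
def IsOccQuot {k n : ℕ} (τ : Equiv.Perm (Fin k)) (c : Comp k)
    (σ : Equiv.Perm (Fin n)) (ψ : Fin c.len → Fin n) : Prop :=
  StrictMono ψ ∧
    ∀ i j : Fin c.len, τ (c.rep i) < τ (c.rep j) ↔ σ (ψ i) < σ (ψ j)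

/-- The left endpoint `a_{i-1} = v_1 + … + v_{i-1}` of the `i`-th segment. -/
noncomputable def segA {n : ℕ} (v : Fin n → ℝ) (i : Fin n) : ℝ :=
  ∑ j ∈ Finset.univ.filter (fun j => j < i), v j

/-- The height `b_i = Σ_{j : σ(j) < σ(i)} v_j` of the `i`-th segment. -/
noncomputable def segB {n : ℕ} (σ : Equiv.Perm (Fin n)) (v : Fin n → ℝ)
    (i : Fin n) : ℝ :=
  ∑ j ∈ Finset.univ.filter (fun j => σ j < σ i), v j

/-- The step-up permuton `Φ_σ^v` of a permutation `σ` with weights `v`: uniform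
measure on the diagonal segments from `(a_{i-1}, b_i)` to `(a_i, b_i + v_i)`,
together with the diagonal segment from `(Σ v_j, Σ v_j)` to `(1,1)`. -/
noncomputable def stepUp {n : ℕ} (σ : Equiv.Perm (Fin n)) (v : Fin n → ℝ) :
    Measure (ℝ × ℝ) :=
  (∑ i : Fin n, (volume.restrict (Set.Icc (segA v i) (segA v i + v i))).map
      (fun x : ℝ => (x, x - segA v i + segB σ v i)))
  + (volume.restrict (Set.Icc (∑ j, v j) 1)).map (fun x : ℝ => (x, x))

/-- The total weight of the indices that precede `i` in the order given by the ranks `r`. -/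
def cumul {ι M : Type*} [Fintype ι] [AddCommMonoid M] (r : ι → ℕ) (v : ι → M) (i : ι) : M :=
  ∑ j with r j < r i, v j

/-- The half-open interval of length `v i` occupied by `i` when the intervals of lengths `v`
are laid out from `0` in the order given by the ranks `r`. -/
def slot {ι M : Type*} [Fintype ι] [AddCommMonoid M] [LinearOrder M] (r : ι → ℕ) (v : ι → M)
    (i : ι) : Set M :=
  Set.Ico (cumul r v i) (cumul r v i + v i)

section Slots

variable {ι M : Type*} [Fintype ι] [AddCommMonoid M] {r : ι → ℕ} {v : ι → M}

lemma cumul_add_self (hr : r.Injective) (i : ι) :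
    cumul r v i + v i = ∑ j with r j ≤ r i, v j := by
  classical
  have h : (Finset.univ.filter fun j => r j ≤ r i)
      = insert i (Finset.univ.filter fun j => r j < r i) := by
    ext j
    simp [le_iff_eq_or_lt, hr.eq_iff]
  rw [h, Finset.sum_insert (by simp), cumul, add_comm]

variable [LinearOrder M]

lemma exists_mem_slot (hr : r.Injective) {x : M} (h0 : 0 ≤ x)
    (hx : x < ∑ i, v i) : ∃ i, x ∈ slot r v i := by
  classical
  have hne : (Finset.univ : Finset ι).Nonempty := by
    by_contra h
    rw [Finset.not_nonempty_iff_eq_empty] at h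
    rw [h, Finset.sum_empty] at hx
    exact absurd hx h0.not_gt
  obtain ⟨m, -, hm⟩ := Finset.exists_max_image Finset.univ r hne
  have hmx : x < cumul r v m + v m := by
    rw [cumul_add_self hr, Finset.filter_true_of_mem fun j hj => hm j hj]
    exact hx
  obtain ⟨i, hi, hmin⟩ := Finset.exists_min_image
    (Finset.univ.filter fun i => x < cumul r v i + v i) r ⟨m, by simpa using hmx⟩
  simp only [Finset.mem_filter, Finset.mem_univ, true_and] at hi hmin
  refine ⟨i, ?_, hi⟩
  rcases (Finset.univ.filter fun j => r j < r i).eq_empty_or_nonempty with he | he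
  · rw [cumul, he, Finset.sum_empty]
    exact h0
  · obtain ⟨l, hl, hmax⟩ := Finset.exists_max_image _ r he
    simp only [Finset.mem_filter, Finset.mem_univ, true_and] at hl hmax
    have hcum : cumul r v i = cumul r v l + v l := by
      rw [cumul_add_self hr, cumul]
      refine Finset.sum_congr ?_ fun _ _ => rfl
      ext j
      simp only [Finset.mem_filter, Finset.mem_univ, true_and]
      exact ⟨hmax j, fun h => h.trans_lt hl⟩
    rw [hcum]
    by_contra hlt
    exact absurd (hmin l (not_le.mp hlt)) hl.not_ge

variable [IsOrderedAddMonoid M]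

lemma cumul_nonneg (hv : ∀ i, 0 ≤ v i) (i : ι) : 0 ≤ cumul r v i :=
  Finset.sum_nonneg fun j _ => hv j

lemma cumul_add_le_cumul (hr : r.Injective) (hv : ∀ i, 0 ≤ v i) {i j : ι} (h : r i < r j) :
    cumul r v i + v i ≤ cumul r v j := by
  rw [cumul_add_self hr]
  refine Finset.sum_le_sum_of_subset_of_nonneg (fun l hl => ?_) fun l _ _ => hv l
  simp only [Finset.mem_filter, Finset.mem_univ, true_and] at hl ⊢
  omega

lemma cumul_add_le_sum (hr : r.Injective) (hv : ∀ i, 0 ≤ v i) (i : ι) :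
    cumul r v i + v i ≤ ∑ j, v j := by
  rw [cumul_add_self hr]
  exact Finset.sum_le_sum_of_subset_of_nonneg (Finset.subset_univ _) fun l _ _ => hv l

lemma lt_of_mem_slot (hr : r.Injective) (hv : ∀ i, 0 ≤ v i) {i j : ι} (h : r i < r j) {x y : M}
    (hx : x ∈ slot r v i) (hy : y ∈ slot r v j) : x < y :=
  hx.2.trans_le ((cumul_add_le_cumul hr hv h).trans hy.1)

lemma eq_of_mem_slot (hr : r.Injective) (hv : ∀ i, 0 ≤ v i) {i j : ι} {x : M}
    (hx : x ∈ slot r v i) (hy : x ∈ slot r v j) : i = j := by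
  rcases lt_trichotomy (r i) (r j) with h | h | h
  · exact absurd (lt_of_mem_slot hr hv h hx hy) (lt_irrefl x)
  · exact hr h
  · exact absurd (lt_of_mem_slot hr hv h hy hx) (lt_irrefl x)

lemma iUnion_slot (hr : r.Injective) (hv : ∀ i, 0 ≤ v i) :
    ⋃ i, slot r v i = Set.Ico 0 (∑ i, v i) := by
  ext x
  simp only [Set.mem_iUnion]
  constructor
  · rintro ⟨i, hi⟩
    exact ⟨(cumul_nonneg hv i).trans hi.1, hi.2.trans_le (cumul_add_le_sum hr hv i)⟩
  · rintro ⟨h0, h1⟩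
    exact exists_mem_slot hr h0 h1

lemma pairwise_disjoint_slot (hr : r.Injective) (hv : ∀ i, 0 ≤ v i) :
    Pairwise (Function.onFun Disjoint (slot r v)) := fun _ _ hij =>
  Set.disjoint_left.mpr fun _ hx hy => hij (eq_of_mem_slot hr hv hx hy)

end Slots

/-! ### Volume of the increasing tuples in a product of slots -/

section Volume

variable {k : ℕ}

lemma volume_not_injective :
    volume {x : Fin k → ℝ | ¬ Function.Injective x} = 0 := by
  have hsub : {x : Fin k → ℝ | ¬ Function.Injective x}
      ⊆ ⋃ q : {q : Fin k × Fin k // q.1 ≠ q.2}, {x : Fin k → ℝ | x q.1.1 = x q.1.2} := by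
    intro x hx
    simp only [Function.Injective, Set.mem_ofPred_eq, not_forall] at hx
    obtain ⟨i, j, h, hij⟩ := hx
    exact Set.mem_iUnion.mpr ⟨⟨(i, j), hij⟩, h⟩
  refine measure_mono_null hsub (measure_iUnion_null ?_)
  rintro ⟨⟨i, j⟩, hij⟩
  let L : (Fin k → ℝ) →ₗ[ℝ] ℝ :=
    LinearMap.proj (R := ℝ) (φ := fun _ => ℝ) i - LinearMap.proj (R := ℝ) (φ := fun _ => ℝ) j
  have hL : {x : Fin k → ℝ | x i = x j} = (LinearMap.ker L : Set (Fin k → ℝ)) := by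
    ext x
    simp [L, sub_eq_zero]
  rw [hL]
  refine Measure.addHaar_submodule volume _ fun htop => ?_
  have : (Pi.single i 1 : Fin k → ℝ) ∈ LinearMap.ker L := htop ▸ Submodule.mem_top
  simp [L, hij.symm] at this

lemma measurableSet_strictMono : MeasurableSet {x : Fin k → ℝ | StrictMono x} := by
  have : {x : Fin k → ℝ | StrictMono x} = ⋂ i, ⋂ j, {x | i < j → x i < x j} := by
    ext x
    simp only [Set.mem_ofPred_eq, Set.mem_iInter]
    exact ⟨fun h i j hij => h hij, fun h i j hij => h i j hij⟩
  rw [this]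
  refine MeasurableSet.iInter fun i => MeasurableSet.iInter fun j => ?_
  by_cases hij : i < j
  · simpa [hij] using measurableSet_lt (measurable_pi_apply i) (measurable_pi_apply j)
  · simp [hij]

lemma measurePreserving_comp_perm (g : Equiv.Perm (Fin k)) :
    MeasurePreserving (fun x : Fin k → ℝ => x ∘ g) := by
  have h : (fun x : Fin k → ℝ => x ∘ g)
      = MeasurableEquiv.piCongrLeft (fun _ : Fin k => ℝ) g.symm := by
    ext x i
    simp [MeasurableEquiv.piCongrLeft, Equiv.piCongrLeft, Equiv.piCongrLeft']
  rw [h]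
  exact volume_measurePreserving_piCongrLeft (fun _ : Fin k => ℝ) g.symm

open Classical in
/-- By symmetry, increasing tuples fill a fraction `1 / |Stab F|` of the box prescribed by `F`. -/
lemma card_mul_volume_strictMono {ι : Type*} {r : ι → ℕ} (hr : r.Injective) {I : ι → Set ℝ}
    (hI : ∀ i j, r i < r j → ∀ x ∈ I i, ∀ y ∈ I j, x < y) (hmeas : ∀ i, MeasurableSet (I i))
    (F : Fin k → ι) (hF : Monotone (r ∘ F)) :
    (Fintype.card {g : Equiv.Perm (Fin k) // F ∘ g = F} : ENNReal)
        * volume {x : Fin k → ℝ | (∀ a, x a ∈ I (F a)) ∧ StrictMono x}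
      = ∏ a, volume (I (F a)) := by
  set G := {g : Equiv.Perm (Fin k) // F ∘ g = F}
  set B := {x : Fin k → ℝ | (∀ a, x a ∈ I (F a)) ∧ StrictMono x} with hB
  have hbox : {x : Fin k → ℝ | ∀ a, x a ∈ I (F a)} = Set.univ.pi fun a => I (F a) := by
    ext x; simp
  have hBm : MeasurableSet B := by
    rw [hB, Set.ofPred_and, hbox]
    exact (MeasurableSet.univ_pi fun a => hmeas _).inter measurableSet_strictMono
  let C : G → Set (Fin k → ℝ) := fun g => (fun x => x ∘ g.1) ⁻¹' B
  have hCm : ∀ g, MeasurableSet (C g) := fun g =>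
    (measurePreserving_comp_perm g.1).measurable hBm
  have hCv : ∀ g, volume (C g) = volume B := fun g =>
    (measurePreserving_comp_perm g.1).measure_preimage hBm.nullMeasurableSet
  have hFg : ∀ (g : G) a, F (g.1 a) = F a := fun g a => congrFun g.2 a
  have hdisj : Pairwise (Function.onFun Disjoint C) := by
    intro g g' hgg
    refine Set.disjoint_left.mpr fun x hx hx' => hgg ?_
    have h1 : x ∘ g.1 = x ∘ g'.1 :=
      Tuple.unique_monotone hx.2.monotone hx'.2.monotone
    have hinj : Function.Injective x := by
      have := hx.2.injective
      exact (g.1.injective_comp x).mp this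
    apply Subtype.ext
    ext a
    exact congrArg _ (hinj (congrFun h1 a))
  have hU : (⋃ g, C g) =ᵐ[volume] (Set.univ.pi fun a => I (F a)) := by
    rw [← hbox]
    have hnull : ∀ᵐ x : Fin k → ℝ, Function.Injective x := by
      rw [ae_iff]; exact volume_not_injective
    filter_upwards [hnull] with x hx
    apply propext
    change x ∈ (⋃ g, C g) ↔ ∀ a, x a ∈ I (F a)
    rw [Set.mem_iUnion]
    constructor
    · rintro ⟨g, hg, -⟩ a
      have := hg (g.1.symm a)
      rw [← hFg g] at this
      simpa using this
    · intro hxa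
      have hmono : StrictMono (x ∘ Tuple.sort x) :=
        (Tuple.monotone_sort x).strictMono_of_injective (hx.comp (Tuple.sort x).injective)
      have hmF : Monotone ((r ∘ F) ∘ Tuple.sort x) := by
        intro a b hab
        by_contra hlt
        exact absurd (hI _ _ (not_le.mp hlt) _ (hxa _) _ (hxa _))
          (hmono.monotone hab).not_gt
      have hEq : (r ∘ F) ∘ Tuple.sort x = (r ∘ F) ∘ (1 : Equiv.Perm (Fin k)) :=
        Tuple.unique_monotone hmF hF
      have hEq' : F ∘ Tuple.sort x = F := by
        ext a; exact hr (congrFun hEq a)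
      refine ⟨⟨Tuple.sort x, hEq'⟩, fun a => ?_, hmono⟩
      have := hxa (Tuple.sort x a)
      rwa [show F (Tuple.sort x a) = F a from congrFun hEq' a] at this
  rw [← volume_pi_pi, ← measure_congr hU, measure_iUnion hdisj hCm, tsum_fintype,
    Finset.sum_congr rfl fun g _ => hCv g, Finset.sum_const, nsmul_eq_mul, Finset.card_univ]

end Volume

/-! ### Slot assignments of the points of an occurrence -/

/-- The point `a` of an occurrence of `τ` may lie on the segment `F a`, where segments are
ordered horizontally by `r` and vertically by `q`. -/
def IsAssignment {ι : Type*} {k : ℕ} (r q : ι → ℕ) (τ : Equiv.Perm (Fin k)) (F : Fin k → ι) :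
    Prop :=
  Monotone (r ∘ F) ∧ ∀ a b, a < b → (τ a < τ b ↔ q (F a) ≤ q (F b))

lemma Indecomposable.exists_inversion {k : ℕ} {τ : Equiv.Perm (Fin k)} (hτ : Indecomposable τ)
    {m : ℕ} (hm : 1 ≤ m) (hmk : m < k) :
    ∃ a b : Fin k, (a : ℕ) < m ∧ m ≤ (b : ℕ) ∧ τ b < τ a := by
  by_contra! hcon
  have hlt : ∀ a b : Fin k, (a : ℕ) < m → m ≤ (b : ℕ) → τ a < τ b := fun a b ha hb =>
    (hcon a b ha hb).lt_of_ne fun h => by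
      have := τ.injective h
      subst this
      omega
  let M : Fin k := ⟨m, hmk⟩
  refine hτ ⟨m, hm, hmk, fun i => ⟨fun h => ?_, fun h => ?_⟩⟩
  · by_contra hi
    have hsub : (Finset.Iio M).map τ.toEmbedding ⊆ Finset.Iio (τ i) := by
      intro x hx
      simp only [Finset.mem_map, Finset.mem_Iio] at hx ⊢
      obtain ⟨a, ha, rfl⟩ := hx
      exact hlt a i ha (not_lt.mp hi)
    have := Finset.card_le_card hsub
    simp only [Finset.card_map, Fin.card_Iio, M] at this
    omega
  · have hsub : (Finset.Ici M).map τ.toEmbedding ⊆ Finset.Ioi (τ i) := by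
      intro x hx
      simp only [Finset.mem_map, Finset.mem_Ici, Finset.mem_Ioi] at hx ⊢
      obtain ⟨b, hb, rfl⟩ := hx
      exact hlt i b h hb
    have := Finset.card_le_card hsub
    simp only [Finset.card_map, Fin.card_Ici, Fin.card_Ioi, M] at this
    omega

/-- The rank of a segment of the step-up permuton when segments are ordered by `σ`; the final
diagonal segment is `none`. -/
def segRank {n : ℕ} (σ : Equiv.Perm (Fin n)) (o : Option (Fin n)) : ℕ :=
  o.elim n fun i => σ i

lemma segRank_injective {n : ℕ} (σ : Equiv.Perm (Fin n)) : (segRank σ).Injective := by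
  rintro (_ | i) (_ | j) h
  · rfl
  · exact absurd h (σ j).2.ne'
  · exact absurd h (σ i).2.ne
  · exact congrArg some (σ.injective (Fin.ext h))

/-- Points of an occurrence of an indecomposable pattern avoid the final diagonal segment. -/
lemma IsAssignment.ne_none {k n : ℕ} (hk : 2 ≤ k) {τ : Equiv.Perm (Fin k)}
    (hτ : Indecomposable τ) {σ : Equiv.Perm (Fin n)} {F : Fin k → Option (Fin n)}
    (hF : IsAssignment (segRank 1) (segRank σ) τ F) (a : Fin k) : F a ≠ none := by
  intro ha
  have hex : ∃ m : ℕ, ∃ h : m < k, F ⟨m, h⟩ = none := ⟨a, a.2, ha⟩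
  classical
  obtain ⟨hm, hmF⟩ := Nat.find_spec hex
  have hle : ∀ o, segRank σ o ≤ segRank σ none := by
    rintro (_ | i)
    · exact le_rfl
    · exact (σ i).2.le
  have hnone : ∀ b : Fin k, Nat.find hex ≤ (b : ℕ) → F b = none := by
    intro b hb
    have h := hF.1 (show (⟨Nat.find hex, hm⟩ : Fin k) ≤ b from hb)
    simp only [Function.comp_apply, hmF] at h
    rcases hFb : F b with _ | i
    · rfl
    · rw [hFb] at h
      exact absurd i.2 (not_lt.mpr h)
  obtain ⟨x, y, hx, hy, hxy⟩ := hτ.exists_inversion (m := max 1 (Nat.find hex))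
    (le_max_left _ _) (max_lt (by omega) hm)
  have hlt : τ x < τ y := by
    refine (hF.2 x y (Fin.lt_def.mpr (by omega))).mpr ?_
    rw [hnone y (le_of_max_le_right hy)]
    exact hle _
  exact absurd hxy hlt.not_gt

/-! ### Partitions into intervals -/

namespace Comp

variable {k : ℕ} (c : Comp k)

lemma exists_mem (a : Fin k) : ∃ i, c.mem i a :=
  exists_mem_slot Fin.val_injective (Nat.zero_le _) (by rw [c.total]; exact a.2)

/-- The index of the part that contains `a`. -/
noncomputable def part (a : Fin k) : Fin c.len := (c.exists_mem a).choose

lemma mem_part (a : Fin k) : c.mem (c.part a) a := (c.exists_mem a).choose_spec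

variable {c}

lemma lt_of_mem {i j : Fin c.len} (h : i < j) {a b : Fin k} (ha : c.mem i a) (hb : c.mem j b) :
    a < b :=
  lt_of_mem_slot Fin.val_injective (fun _ => Nat.zero_le _) h ha hb

lemma part_eq_iff {i : Fin c.len} {a : Fin k} : c.part a = i ↔ c.mem i a :=
  ⟨fun h => h ▸ c.mem_part a, fun h =>
    eq_of_mem_slot Fin.val_injective (fun _ => Nat.zero_le _) (c.mem_part a) h⟩

lemma monotone_part : Monotone c.part := fun a b hab => by
  by_contra h
  exact absurd (lt_of_mem (not_le.mp h) (c.mem_part b) (c.mem_part a)) hab.not_gt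

lemma rep_mem (i : Fin c.len) : c.mem i (c.rep i) :=
  ⟨le_rfl, Nat.lt_add_of_pos_right (c.pos i)⟩

lemma part_rep (i : Fin c.len) : c.part (c.rep i) = i := part_eq_iff.mpr (rep_mem i)

lemma card_part_eq (i : Fin c.len) : (Finset.univ.filter fun a => c.part a = i).card = c.s i := by
  have h : (Finset.univ.filter fun a => c.part a = i).map Fin.valEmbedding
      = Finset.Ico (c.off i) (c.off i + c.s i) := by
    ext x
    simp only [Finset.mem_map, Finset.mem_filter, Finset.mem_univ, true_and, part_eq_iff,
      Finset.mem_Ico, Fin.valEmbedding_apply]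
    constructor
    · rintro ⟨a, ha, rfl⟩
      exact ha
    · intro hx
      exact ⟨⟨x, hx.2.trans_le (c.off_add_le i)⟩, hx, rfl⟩
  rw [← Finset.card_map, h, Nat.card_Ico, Nat.add_sub_cancel_left]

end Comp

lemma IsCompressive.lt_iff_rep_lt {k : ℕ} {τ : Equiv.Perm (Fin k)} {c : Comp k}
    (hc : IsCompressive τ c) {a b : Fin k} (h : c.part a ≠ c.part b) :
    τ a < τ b ↔ τ (c.rep (c.part a)) < τ (c.rep (c.part b)) := by
  have key : ∀ a b : Fin k, c.part a ≠ c.part b →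
      τ (c.rep (c.part a)) < τ (c.rep (c.part b)) → τ a < τ (c.rep (c.part b)) := by
    intro a b hab hlt
    by_contra hge
    set i := c.part a with hi
    set j := c.part b with hj
    have ha := hc i a (c.rep i) (c.mem_part a) (Comp.rep_mem i)
    have hma := c.mem_part a
    rw [← hi] at hma
    have h1 : (τ (c.rep i) : ℕ) < τ (c.rep j) := hlt
    have h2 : (τ (c.rep j) : ℕ) ≤ τ a := not_lt.mp hge
    have hrep : (c.rep i : ℕ) = c.off i := rfl
    have hoff := c.off_add_le i
    obtain ⟨hm1, hm2⟩ := hma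
    let x : Fin k := ⟨c.off i + (τ (c.rep j) - τ (c.rep i)), by omega⟩
    have hx : c.mem i x := ⟨by simp [x], by simp only [x]; omega⟩
    have hxτ := hc i x (c.rep i) hx (Comp.rep_mem i)
    have hxeq : τ x = τ (c.rep j) := Fin.ext (by simp only [x] at hxτ ⊢; omega)
    have := τ.injective hxeq
    rw [← Comp.part_eq_iff] at hx
    rw [this, Comp.part_rep] at hx
    exact hab hx.symm
  have hge : ∀ a : Fin k, τ (c.rep (c.part a)) ≤ τ a := by
    intro a
    have h1 := hc _ a (c.rep (c.part a)) (c.mem_part a) (Comp.rep_mem _)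
    have h2 := (c.mem_part a).1
    have hrep : (c.rep (c.part a) : ℕ) = c.off (c.part a) := rfl
    exact Fin.le_def.mpr (by omega)
  constructor
  · intro hlt
    by_contra hcon
    have hne : τ (c.rep (c.part b)) ≠ τ (c.rep (c.part a)) := fun heq => h (by
      have := congrArg c.part (τ.injective heq)
      rw [Comp.part_rep, Comp.part_rep] at this
      exact this.symm)
    have := key b a h.symm ((not_lt.mp hcon).lt_of_ne hne)
    exact absurd (hlt.trans this) (hge a).not_gt
  · intro hlt
    exact (key a b h hlt).trans_le (hge b)

lemma IsCompressive.isAssignment {k n : ℕ} {τ : Equiv.Perm (Fin k)} {c : Comp k}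
    (hc : IsCompressive τ c) {σ : Equiv.Perm (Fin n)} {ψ : Fin c.len → Fin n}
    (hψ : IsOccQuot τ c σ ψ) :
    IsAssignment Fin.val (fun i => (σ i : ℕ)) τ (ψ ∘ c.part) := by
  refine ⟨fun a b hab => hψ.1.monotone (Comp.monotone_part hab), fun a b hab => ?_⟩
  by_cases h : c.part a = c.part b
  · have h1 := hc _ a b (c.mem_part a) (h ▸ c.mem_part b)
    simp only [Function.comp_apply, h, le_refl, iff_true]
    rw [Fin.lt_def] at hab ⊢
    omega
  · rw [hc.lt_iff_rep_lt h, hψ.2]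
    have hne : σ (ψ (c.part a)) ≠ σ (ψ (c.part b)) := fun heq =>
      h (hψ.1.injective (σ.injective heq))
    exact ⟨fun hlt => hlt.le, fun hle => lt_of_le_of_ne hle hne⟩

lemma Fin.val_lt_card_filter_iff {k : ℕ} {Q : Fin k → Prop} [DecidablePred Q]
    (hQ : ∀ a b, a ≤ b → Q b → Q a) (a : Fin k) :
    (a : ℕ) < (Finset.univ.filter Q).card ↔ Q a := by
  constructor
  · intro h
    by_contra ha
    have hsub : Finset.univ.filter Q ⊆ Finset.Iio a := by
      intro b hb
      simp only [Finset.mem_filter, Finset.mem_univ, true_and, Finset.mem_Iio] at hb ⊢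
      by_contra hab
      exact ha (hQ a b (not_lt.mp hab) hb)
    have := Finset.card_le_card hsub
    rw [Fin.card_Iio] at this
    omega
  · intro h
    have hsub : Finset.Iic a ⊆ Finset.univ.filter Q := by
      intro b hb
      simp only [Finset.mem_filter, Finset.mem_univ, true_and, Finset.mem_Iic] at hb ⊢
      exact hQ b a hb h
    have := Finset.card_le_card hsub
    rw [Fin.card_Iic] at this
    omega

/-- A pattern acts as a shift on the points assigned to a common segment. -/
lemma IsAssignment.shift {k n : ℕ} {τ : Equiv.Perm (Fin k)} {σ : Equiv.Perm (Fin n)}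
    {f : Fin k → Fin n} (hf : IsAssignment Fin.val (fun i => (σ i : ℕ)) τ f) (a : Fin k) (d : ℕ)
    (had : (a : ℕ) + d < k) (h : f ⟨a + d, had⟩ = f a) : (τ ⟨a + d, had⟩ : ℕ) = τ a + d := by
  induction d with
  | zero => rfl
  | succ d ih =>
    have had' : (a : ℕ) + d < k := by omega
    set b : Fin k := ⟨a + d, had'⟩ with hb
    set e : Fin k := ⟨a + (d + 1), had⟩ with he
    have hbe : b < e := Fin.lt_def.mpr (by simp [hb, he])
    have hfab : f a ≤ f b := hf.1 (Fin.le_def.mpr (by simp [hb]))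
    have hfbe : f b ≤ f e := hf.1 hbe.le
    have hfb : f b = f a := le_antisymm (h ▸ hfbe) hfab
    have hih : (τ b : ℕ) = τ a + d := ih had' hfb
    have hτ : τ b < τ e := (hf.2 b e hbe).mpr (by rw [h, hfb])
    by_contra hne
    change ¬ (τ e : ℕ) = τ a + (d + 1) at hne
    have hgap : (τ b : ℕ) + 1 < τ e := by
      rw [Fin.lt_def] at hτ
      omega
    obtain ⟨x, hx⟩ := τ.surjective ⟨τ b + 1, hgap.trans (τ e).2⟩
    have hxv : (τ x : ℕ) = τ b + 1 := by rw [hx]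
    have hbx : τ b < τ x := Fin.lt_def.mpr (by omega)
    have hxe : τ x < τ e := Fin.lt_def.mpr (by omega)
    have hxb' : x ≠ b := fun hh => by rw [hh] at hbx; exact lt_irrefl _ hbx
    have hxe' : x ≠ e := fun hh => by rw [hh] at hxe; exact lt_irrefl _ hxe
    rcases lt_or_gt_of_ne hxb' with hlt | hlt
    · have h1 := mt (hf.2 x b hlt).mpr hbx.not_gt
      have h2 := (hf.2 x e (hlt.trans hbe)).mp hxe
      rw [h, ← hfb] at h2
      exact h1 h2
    · have hlt' : e < x := by
        rw [Fin.lt_def] at hlt ⊢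
        have : (x : ℕ) ≠ e := fun hh => hxe' (Fin.ext hh)
        simp only [hb, he] at *
        omega
      have h1 := mt (hf.2 e x hlt').mpr hxe.not_gt
      have h2 := (hf.2 b x hlt).mp hbx
      rw [hfb, ← h] at h2
      exact h1 h2

/-- Every assignment arises from a compressive partition and occurrence of the quotient. -/
lemma IsAssignment.exists_comp {k n : ℕ} {τ : Equiv.Perm (Fin k)} {σ : Equiv.Perm (Fin n)}
    {f : Fin k → Fin n} (hf : IsAssignment Fin.val (fun i => (σ i : ℕ)) τ f) :
    ∃ c : Comp k, IsCompressive τ c ∧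
      ∃ ψ : Fin c.len → Fin n, IsOccQuot τ c σ ψ ∧ ψ ∘ c.part = f := by
  classical
  have hmono : Monotone f := hf.1
  set R := Finset.univ.image f with hR
  let ψ : Fin R.card ↪o Fin n := R.orderEmbOfFin rfl
  have hrange : ∀ a, ∃ i, ψ i = f a := fun a => by
    have : f a ∈ Set.range ψ := by
      rw [Finset.range_orderEmbOfFin]
      simp [hR]
    exact this
  have hcov : ∀ i, ∃ a, f a = ψ i := fun i => by
    obtain ⟨a, -, ha⟩ := Finset.mem_image.mp (Finset.orderEmbOfFin_mem R rfl i)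
    exact ⟨a, ha⟩
  let s : Fin R.card → ℕ := fun i => (Finset.univ.filter fun a => f a = ψ i).card
  have hfiber : ∀ S : Finset (Fin R.card), ∑ i ∈ S, s i
      = (Finset.univ.filter fun a => ∃ i ∈ S, f a = ψ i).card := by
    intro S
    rw [← Finset.card_biUnion]
    · congr 1
      ext a
      simp
    · intro i _ j _ hij
      refine Finset.disjoint_left.mpr fun a ha hb => hij ?_
      simp only [Finset.mem_filter, Finset.mem_univ, true_and] at ha hb
      exact ψ.injective (ha.symm.trans hb)
  let c : Comp k :=
    { len := R.card
      s := s
      pos := fun i => by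
        obtain ⟨a, ha⟩ := hcov i
        exact Finset.card_pos.mpr ⟨a, by simpa using ha⟩
      total := by
        rw [hfiber, Finset.filter_true_of_mem, Finset.card_univ, Fintype.card_fin]
        intro a _
        obtain ⟨i, hi⟩ := hrange a
        exact ⟨i, Finset.mem_univ _, hi.symm⟩ }
  have hoff : ∀ i : Fin R.card, c.off i = (Finset.univ.filter fun a => f a < ψ i).card := by
    intro i
    rw [Comp.off]
    refine (hfiber _).trans (congrArg _ (Finset.filter_congr fun a _ => ?_))
    simp only [Finset.mem_filter, Finset.mem_univ, true_and]
    constructor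
    · rintro ⟨j, hj, hja⟩
      rw [hja]
      exact ψ.strictMono hj
    · intro h
      obtain ⟨j, hj⟩ := hrange a
      exact ⟨j, ψ.lt_iff_lt.mp (hj ▸ h), hj.symm⟩
  have hoff' : ∀ i : Fin R.card,
      c.off i + c.s i = (Finset.univ.filter fun a => f a ≤ ψ i).card := by
    intro i
    rw [hoff, ← Finset.card_union_of_disjoint]
    · congr 1
      ext a
      simp [le_iff_lt_or_eq]
    · refine Finset.disjoint_left.mpr fun a ha hb => ?_
      simp only [Finset.mem_filter, Finset.mem_univ, true_and] at ha hb
      exact ha.ne hb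
  have hmem : ∀ (i : Fin R.card) a, c.mem i a ↔ f a = ψ i := by
    intro i a
    rw [Comp.mem, hoff', Fin.val_lt_card_filter_iff fun x y hxy hy => (hmono hxy).trans hy,
      ← not_lt, hoff, Fin.val_lt_card_filter_iff fun x y hxy hy => (hmono hxy).trans_lt hy,
      not_lt]
    exact ⟨fun h => le_antisymm h.2 h.1, fun h => ⟨h.ge, h.le⟩⟩
  have hpart : ∀ a, ψ (c.part a) = f a := fun a => ((hmem _ _).mp (c.mem_part a)).symm
  have hshift : ∀ a b : Fin k, a ≤ b → f a = f b → (τ a : ℕ) + b = τ b + a := by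
    intro a b hab h
    rw [Fin.le_def] at hab
    have hb : b = ⟨a + (b - a), by omega⟩ := Fin.ext (by simp only; omega)
    have := hf.shift a (b - a) (by omega) (by rw [← hb, h])
    rw [← hb] at this
    omega
  have hrep : ∀ i : Fin R.card, f (c.rep i) = ψ i := fun i => (hmem i _).mp (Comp.rep_mem (c := c) i)
  refine ⟨c, fun i a b ha hb => ?_, ψ, ⟨ψ.strictMono, fun i j => ?_⟩, funext hpart⟩
  · have hfab : f a = f b := ((hmem i a).mp ha).trans ((hmem i b).mp hb).symm
    rcases le_total a b with h | h
    · exact hshift a b h hfab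
    · exact (hshift b a h hfab.symm).symm
  · rcases lt_trichotomy i j with h | rfl | h
    · have hlt := Comp.lt_of_mem h (Comp.rep_mem (c := c) i) (Comp.rep_mem j)
      have hne : σ (ψ i) ≠ σ (ψ j) := fun heq => h.ne (ψ.injective (σ.injective heq))
      rw [hf.2 _ _ hlt, hrep, hrep]
      exact ⟨fun hle => lt_of_le_of_ne hle hne, fun h => h.le⟩
    · simp
    · have hlt := Comp.lt_of_mem h (Comp.rep_mem (c := c) j) (Comp.rep_mem i)
      have h1 := hf.2 _ _ hlt
      rw [hrep, hrep] at h1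
      have hne : τ (c.rep j) ≠ τ (c.rep i) := fun heq => hlt.ne (τ.injective heq)
      constructor
      · intro hh
        by_contra hcon
        exact absurd (h1.mpr (not_lt.mp hcon)) hh.not_gt
      · intro hh
        refine lt_of_le_of_ne (not_lt.mp fun hcon => ?_) hne.symm
        exact absurd (h1.mp hcon) (not_le.mpr hh)

/-- Compressive partitions together with an occurrence of the quotient correspond to
assignments of points to segments. -/
noncomputable def assignmentEquiv {k n : ℕ} (τ : Equiv.Perm (Fin k)) (σ : Equiv.Perm (Fin n)) :
    (Σ c : {c : Comp k // IsCompressive τ c},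
        {ψ : Fin c.1.len → Fin n // IsOccQuot τ c.1 σ ψ})
      ≃ {f : Fin k → Fin n // IsAssignment Fin.val (fun i => (σ i : ℕ)) τ f} :=
  Equiv.ofBijective (fun q => ⟨q.2.1 ∘ q.1.1.part, q.1.2.isAssignment q.2.2⟩) <| by
    constructor
    · rintro ⟨⟨c, hc⟩, ψ, hψ⟩ ⟨⟨c', hc'⟩, ψ', hψ'⟩ h
      have hfun : ψ ∘ c.part = ψ' ∘ c'.part := congrArg Subtype.val h
      have hsurj : ∀ c : Comp k, Function.Surjective c.part := fun c i => ⟨_, Comp.part_rep i⟩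
      have hrange : Set.range ψ = Set.range ψ' := by
        rw [← (hsurj c).range_comp, hfun, (hsurj c').range_comp]
      have hcard : ∀ (i : Fin c.len) (j : Fin c'.len), ψ i = ψ' j → c.s i = c'.s j := by
        intro i j hij
        rw [← Comp.card_part_eq, ← Comp.card_part_eq]
        congr 1
        ext a
        simp only [Finset.mem_filter, Finset.mem_univ, true_and]
        rw [← hψ.1.injective.eq_iff, ← hψ'.1.injective.eq_iff, hij]
        exact Eq.congr_left (congrFun hfun a)
      clear h hfun
      have hlen : c.len = c'.len := by
        have h1 := Set.card_range_of_injective hψ.1.injective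
        have h2 := Set.card_range_of_injective hψ'.1.injective
        simp only [Fintype.card_fin] at h1 h2
        rw [← h1, ← h2]
        exact Fintype.card_congr (Equiv.setCongr hrange)
      obtain ⟨len, s, pos, total⟩ := c
      obtain ⟨len', s', pos', total'⟩ := c'
      obtain rfl : len = len' := hlen
      obtain rfl : ψ = ψ' := (hψ.1.range_inj hψ'.1).mp hrange
      obtain rfl : s = s' := funext fun i => hcard i i rfl
      rfl
    · rintro ⟨f, hf⟩
      obtain ⟨c, hc, ψ, hψ, rfl⟩ := hf.exists_comp
      exact ⟨⟨⟨c, hc⟩, ⟨ψ, hψ⟩⟩, rfl⟩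

/-! ### Measures supported on diagonal segments -/

section Segments

variable {ι : Type*} [Fintype ι] {r q : ι → ℕ} {v : ι → ℝ}

/-- The uniform measure on diagonal segments of lengths `v`, laid out horizontally in the order
of the ranks `r` and vertically in the order of the ranks `q`. -/
noncomputable def segMeasure (r q : ι → ℕ) (v : ι → ℝ) : Measure (ℝ × ℝ) :=
  ∑ i, (volume.restrict (slot r v i)).map fun x => (x, x - cumul r v i + cumul q v i)

/-- The parametrization by the first coordinate of the union of the segments. -/
noncomputable def segMap (r q : ι → ℕ) (v : ι → ℝ) (x : ℝ) : ℝ × ℝ :=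
  (x, x + ∑ i, (slot r v i).indicator (fun _ => cumul q v i - cumul r v i) x)

lemma measurableSet_slot (i : ι) : MeasurableSet (slot r v i) := measurableSet_Ico

lemma measurable_segMap : Measurable (segMap r q v) :=
  measurable_id.prodMk (measurable_id.add (Finset.measurable_fun_sum _ fun i _ =>
    measurable_const.indicator (measurableSet_slot i)))

lemma segMap_of_mem (hr : r.Injective) (hv : ∀ i, 0 ≤ v i) {i : ι} {x : ℝ}
    (hx : x ∈ slot r v i) : segMap r q v x = (x, x - cumul r v i + cumul q v i) := by
  have h : ∑ j, (slot r v j).indicator (fun _ => cumul q v j - cumul r v j) x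
      = cumul q v i - cumul r v i := by
    rw [Finset.sum_eq_single i, Set.indicator_of_mem hx]
    · intro j _ hj
      exact Set.indicator_of_notMem (fun hxj => hj (eq_of_mem_slot hr hv hxj hx)) _
    · simp
  rw [segMap, h]
  congr 1
  ring

lemma segMap_snd_mem (hr : r.Injective) (hv : ∀ i, 0 ≤ v i) {i : ι} {x : ℝ}
    (hx : x ∈ slot r v i) : (segMap r q v x).2 ∈ slot q v i := by
  rw [segMap_of_mem hr hv hx]
  obtain ⟨h1, h2⟩ := hx
  constructor <;> simp only <;> linarith

lemma restrict_Ico_eq_sum_slot (hr : r.Injective) (hv : ∀ i, 0 ≤ v i) (hsum : ∑ i, v i = 1) :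
    (volume : Measure ℝ).restrict (Set.Ico 0 1)
      = Measure.sum fun i => volume.restrict (slot r v i) := by
  rw [← hsum, ← iUnion_slot hr hv,
    Measure.restrict_iUnion (pairwise_disjoint_slot hr hv) measurableSet_slot]

lemma segMeasure_eq_map (hr : r.Injective) (hv : ∀ i, 0 ≤ v i) (hsum : ∑ i, v i = 1) :
    segMeasure r q v = (volume.restrict (Set.Ico 0 1)).map (segMap r q v) := by
  rw [restrict_Ico_eq_sum_slot hr hv hsum, Measure.map_sum measurable_segMap.aemeasurable,
    Measure.sum_fintype, segMeasure]
  refine Finset.sum_congr rfl fun i _ => Measure.map_congr ?_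
  filter_upwards [ae_restrict_mem (measurableSet_slot i)] with x hx
  exact (segMap_of_mem hr hv hx).symm

lemma map_fst_segMeasure (hr : r.Injective) (hv : ∀ i, 0 ≤ v i) (hsum : ∑ i, v i = 1) :
    (segMeasure r q v).map Prod.fst = volume.restrict (Set.Ico 0 1) := by
  rw [segMeasure_eq_map hr hv hsum, Measure.map_map measurable_fst measurable_segMap]
  exact Measure.map_id

lemma map_snd_segMeasure (hq : q.Injective) (hv : ∀ i, 0 ≤ v i) (hsum : ∑ i, v i = 1) :
    (segMeasure r q v).map Prod.snd = volume.restrict (Set.Ico 0 1) := by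
  rw [restrict_Ico_eq_sum_slot hq hv hsum, segMeasure, ← Measure.sum_fintype,
    Measure.map_sum measurable_snd.aemeasurable]
  congr 1
  ext1 i
  rw [Measure.map_map measurable_snd (by fun_prop)]
  have hpre : slot r v i = (fun x => x + (cumul q v i - cumul r v i)) ⁻¹' slot q v i := by
    ext x
    simp only [slot, Set.mem_preimage, Set.mem_Ico]
    constructor <;> rintro ⟨h1, h2⟩ <;> constructor <;> linarith
  have hfun : (Prod.snd ∘ fun x : ℝ => (x, x - cumul r v i + cumul q v i))
      = fun x => x + (cumul q v i - cumul r v i) := by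
    ext x
    simp only [Function.comp_apply]
    ring
  rw [hfun, hpre]
  exact ((measurePreserving_add_right volume _).restrict_preimage (measurableSet_slot i)).map_eq

lemma snd_lt_snd_iff (hr : r.Injective) (hq : q.Injective) (hv : ∀ i, 0 ≤ v i) {i j : ι}
    {x y : ℝ} (hx : x ∈ slot r v i) (hy : y ∈ slot r v j) (hxy : x < y) :
    (segMap r q v x).2 < (segMap r q v y).2 ↔ q i ≤ q j := by
  have hx' := segMap_snd_mem (q := q) hr hv hx
  have hy' := segMap_snd_mem (q := q) hr hv hy
  rcases lt_trichotomy (q i) (q j) with h | h | h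
  · exact iff_of_true (lt_of_mem_slot hq hv h hx' hy') h.le
  · obtain rfl := hq h
    refine iff_of_true ?_ le_rfl
    rw [segMap_of_mem hr hv hx, segMap_of_mem hr hv hy]
    simp only
    linarith
  · exact iff_of_false (lt_of_mem_slot hq hv h hy' hx').not_gt h.not_ge

lemma snd_ne_snd (hr : r.Injective) (hq : q.Injective) (hv : ∀ i, 0 ≤ v i) {i j : ι}
    {x y : ℝ} (hx : x ∈ slot r v i) (hy : y ∈ slot r v j) (hxy : x < y) :
    (segMap r q v x).2 ≠ (segMap r q v y).2 := by
  rcases le_or_gt (q i) (q j) with h | h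
  · exact ((snd_lt_snd_iff hr hq hv hx hy hxy).mpr h).ne
  · exact (lt_of_mem_slot hq hv h (segMap_snd_mem hr hv hy) (segMap_snd_mem hr hv hx)).ne'

lemma pattern_iff_isAssignment {k : ℕ} (τ : Equiv.Perm (Fin k)) (hr : r.Injective)
    (hq : q.Injective) (hv : ∀ i, 0 ≤ v i) {F : Fin k → ι} {x : Fin k → ℝ}
    (hx : ∀ a, x a ∈ slot r v (F a)) (hmono : StrictMono x) :
    (∀ a b, (segMap r q v (x a)).2 < (segMap r q v (x b)).2 ↔ τ a < τ b)
      ↔ IsAssignment r q τ F := by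
  have key : ∀ a b, a < b →
      ((segMap r q v (x a)).2 < (segMap r q v (x b)).2 ↔ q (F a) ≤ q (F b)) := fun a b hab =>
    snd_lt_snd_iff hr hq hv (hx a) (hx b) (hmono hab)
  constructor
  · intro h
    refine ⟨fun a b hab => ?_, fun a b hab => by rw [← h, key a b hab]⟩
    by_contra hlt
    exact absurd (lt_of_mem_slot hr hv (not_le.mp hlt) (hx b) (hx a))
      (hmono.monotone hab).not_gt
  · intro h
    have hlt : ∀ a b, a < b →
        ((segMap r q v (x a)).2 < (segMap r q v (x b)).2 ↔ τ a < τ b) := fun a b hab => by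
      rw [h.2 a b hab, key a b hab]
    intro a b
    rcases lt_trichotomy a b with hab | rfl | hab
    · exact hlt a b hab
    · simp
    · have hne := snd_ne_snd (q := q) hr hq hv (hx b) (hx a) (hmono hab)
      have hne' : τ b ≠ τ a := fun heq => hab.ne (τ.injective heq)
      rw [← not_le, ← not_le, not_iff_not, le_iff_lt_or_eq, le_iff_lt_or_eq,
        or_iff_left hne, or_iff_left hne']
      exact hlt b a hab

open Classical in
lemma volume_strictMono_slot {k : ℕ} (hr : r.Injective) (hv : ∀ i, 0 ≤ v i) (F : Fin k → ι)
    (hF : Monotone (r ∘ F)) :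
    volume {x : Fin k → ℝ | (∀ a, x a ∈ slot r v (F a)) ∧ StrictMono x}
      = ENNReal.ofReal ((∏ a, v (F a))
          / Fintype.card {g : Equiv.Perm (Fin k) // F ∘ g = F}) := by
  have h := card_mul_volume_strictMono hr (I := slot r v)
    (fun i j hij x hx y hy => lt_of_mem_slot hr hv hij hx hy) measurableSet_slot F hF
  have hvol : ∀ a, volume (slot r v (F a)) = ENNReal.ofReal (v (F a)) := fun a => by
    rw [slot, Real.volume_Ico, add_sub_cancel_left]
  have : Nonempty {g : Equiv.Perm (Fin k) // F ∘ g = F} := ⟨⟨1, rfl⟩⟩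
  have hpos : 0 < Fintype.card {g : Equiv.Perm (Fin k) // F ∘ g = F} := Fintype.card_pos
  rw [Finset.prod_congr rfl fun a _ => hvol a,
    ← ENNReal.ofReal_prod_of_nonneg fun a _ => hv _] at h
  rw [ENNReal.ofReal_div_of_pos (by exact_mod_cast hpos), ENNReal.ofReal_natCast,
    ENNReal.eq_div_iff (by exact_mod_cast hpos.ne') (ENNReal.natCast_ne_top _)]
  exact h

open Classical in
lemma pi_segMeasure_pattern {k : ℕ} (τ : Equiv.Perm (Fin k)) (hr : r.Injective)
    (hq : q.Injective) (hv : ∀ i, 0 ≤ v i) (hsum : ∑ i, v i = 1)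
    [IsProbabilityMeasure (segMeasure r q v)] :
    (Measure.pi (fun _ : Fin k => segMeasure r q v)
      {g : Fin k → ℝ × ℝ | (∀ i j : Fin k, i < j → (g i).1 < (g j).1) ∧
        (∀ i j : Fin k, (g i).2 < (g j).2 ↔ τ i < τ j)}).toReal
      = ∑ F : {F : Fin k → ι // IsAssignment r q τ F}, (∏ a, v (F.1 a))
          / Fintype.card {g : Equiv.Perm (Fin k) // F.1 ∘ g = F.1} := by
  set S := {g : Fin k → ℝ × ℝ | (∀ i j : Fin k, i < j → (g i).1 < (g j).1) ∧
        (∀ i j : Fin k, (g i).2 < (g j).2 ↔ τ i < τ j)} with hS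
  have hSm : MeasurableSet S := by
    have hS' : S = ⋂ i, ⋂ j, ({g | i < j → (g i).1 < (g j).1}
        ∩ {g | (g i).2 < (g j).2 ↔ τ i < τ j}) := by
      ext g
      simp only [hS, Set.mem_iInter, Set.mem_inter_iff, Set.mem_ofPred_eq, forall_and]
    rw [hS']
    refine MeasurableSet.iInter fun i => MeasurableSet.iInter fun j => MeasurableSet.inter ?_ ?_
    · by_cases hij : i < j
      · simpa [hij] using measurableSet_lt (measurable_pi_apply i).fst (measurable_pi_apply j).fst
      · simp [hij]
    · have hm : MeasurableSet {g : Fin k → ℝ × ℝ | (g i).2 < (g j).2} :=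
        measurableSet_lt (measurable_pi_apply i).snd (measurable_pi_apply j).snd
      by_cases hij : τ i < τ j
      · simpa [hij] using hm
      · simpa [hij] using measurableSet_le (measurable_pi_apply j).snd (measurable_pi_apply i).snd
  let D : {F : Fin k → ι // IsAssignment r q τ F} → Set (Fin k → ℝ) := fun F =>
    {x | (∀ a, x a ∈ slot r v (F.1 a)) ∧ StrictMono x}
  have hD : (fun (x : Fin k → ℝ) i => segMap r q v (x i)) ⁻¹' S
      ∩ Set.univ.pi (fun _ => Set.Ico (0 : ℝ) 1) = ⋃ F, D F := by
    ext x
    simp only [Set.mem_inter_iff, Set.mem_preimage, Set.mem_iUnion, Set.mem_univ_pi]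
    constructor
    · rintro ⟨⟨hmono, hpat⟩, hx⟩
      have hex : ∀ a, ∃ i, x a ∈ slot r v i := fun a =>
        exists_mem_slot hr (hx a).1 (by rw [hsum]; exact (hx a).2)
      choose F hF using hex
      have hmono' : StrictMono x := fun a b hab => hmono a b hab
      exact ⟨⟨F, (pattern_iff_isAssignment τ hr hq hv hF hmono').mp hpat⟩, hF, hmono'⟩
    · rintro ⟨⟨F, hF⟩, hx, hmono⟩
      refine ⟨⟨fun i j hij => hmono hij, (pattern_iff_isAssignment τ hr hq hv hx hmono).mpr hF⟩,
        fun a => ?_⟩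
      have : x a ∈ ⋃ i, slot r v i := Set.mem_iUnion.mpr ⟨_, hx a⟩
      rwa [iUnion_slot hr hv, hsum] at this
  have hDm : ∀ F, MeasurableSet (D F) := fun F => by
    have : D F = (Set.univ.pi fun a => slot r v (F.1 a)) ∩ {x | StrictMono x} := by
      ext x
      simp [D]
    rw [this]
    exact (MeasurableSet.univ_pi fun a => measurableSet_slot _).inter measurableSet_strictMono
  have hDd : Pairwise (Function.onFun Disjoint D) := fun F G hFG =>
    Set.disjoint_left.mpr fun x hxF hxG =>
      hFG (Subtype.ext (funext fun a => eq_of_mem_slot hr hv (hxF.1 a) (hxG.1 a)))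
  have hmap : Measurable fun (x : Fin k → ℝ) i => segMap r q v (x i) :=
    measurable_pi_lambda _ fun i => measurable_segMap.comp (measurable_pi_apply i)
  have hpi : Measure.pi (fun _ : Fin k => segMeasure r q v)
      = (Measure.pi fun _ : Fin k => volume.restrict (Set.Ico (0 : ℝ) 1)).map
        fun x i => segMap r q v (x i) := by
    simp only [segMeasure_eq_map hr hv hsum]
    exact (Measure.pi_map_pi fun _ => measurable_segMap.aemeasurable).symm
  rw [hpi, Measure.map_apply hmap hSm, ← Measure.restrict_pi_pi,
    Measure.restrict_apply (hmap hSm), hD, ← volume_pi, measure_iUnion hDd hDm, tsum_fintype,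
    Finset.sum_congr rfl fun F _ => volume_strictMono_slot hr hv F.1 F.2.1,
    ENNReal.toReal_sum fun _ _ => ENNReal.ofReal_ne_top]
  refine Finset.sum_congr rfl fun F _ => ENNReal.toReal_ofReal ?_
  exact div_nonneg (Finset.prod_nonneg fun a _ => hv _) (Nat.cast_nonneg _)

end Segments

/-- A measure on the plane whose marginals are uniform on the unit interval is a permuton. -/
def Permuton.ofMarginals (μ : Measure (ℝ × ℝ))
    (hfst : μ.map Prod.fst = volume.restrict (Set.Ico 0 1))
    (hsnd : μ.map Prod.snd = volume.restrict (Set.Ico 0 1)) : Permuton where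
  μ := μ
  prob := by
    constructor
    have h := congrArg (fun ν : Measure ℝ => ν Set.univ) hfst
    simpa [Measure.map_apply measurable_fst MeasurableSet.univ] using h
  margX a b ha _ hb := by
    have hae : ∀ᵐ z ∂μ, z.2 ∈ Set.Icc (0 : ℝ) 1 := by
      have h : ∀ᵐ y ∂(μ.map Prod.snd), y ∈ Set.Icc (0 : ℝ) 1 := by
        rw [hsnd]
        filter_upwards [ae_restrict_mem measurableSet_Ico] with y hy
        exact Set.Ico_subset_Icc_self hy
      exact ae_of_ae_map measurable_snd.aemeasurable h
    have heq : (Set.Icc a b ×ˢ Set.Icc (0 : ℝ) 1 : Set (ℝ × ℝ)) =ᵐ[μ] Prod.fst ⁻¹' Set.Icc a b := by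
      filter_upwards [hae] with z hz
      exact propext (and_iff_left hz)
    rw [measure_congr heq, ← Measure.map_apply measurable_fst measurableSet_Icc, hfst,
      Measure.restrict_congr_set Ico_ae_eq_Icc, Measure.restrict_apply measurableSet_Icc,
      Set.inter_eq_left.mpr (Set.Icc_subset_Icc ha hb), Real.volume_Icc]
  margY a b ha _ hb := by
    have hae : ∀ᵐ z ∂μ, z.1 ∈ Set.Icc (0 : ℝ) 1 := by
      have h : ∀ᵐ y ∂(μ.map Prod.fst), y ∈ Set.Icc (0 : ℝ) 1 := by
        rw [hfst]
        filter_upwards [ae_restrict_mem measurableSet_Ico] with y hy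
        exact Set.Ico_subset_Icc_self hy
      exact ae_of_ae_map measurable_fst.aemeasurable h
    have heq : (Set.Icc (0 : ℝ) 1 ×ˢ Set.Icc a b : Set (ℝ × ℝ)) =ᵐ[μ] Prod.snd ⁻¹' Set.Icc a b := by
      filter_upwards [hae] with z hz
      exact propext (and_iff_right hz)
    rw [measure_congr heq, ← Measure.map_apply measurable_snd measurableSet_Icc, hsnd,
      Measure.restrict_congr_set Ico_ae_eq_Icc, Measure.restrict_apply measurableSet_Icc,
      Set.inter_eq_left.mpr (Set.Icc_subset_Icc ha hb), Real.volume_Icc]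

/-! ### The step-up permuton -/

/-- The lengths of the segments of the step-up permuton, the final one included. -/
noncomputable def segLength {n : ℕ} (p : Fin n → ℝ) (o : Option (Fin n)) : ℝ :=
  o.elim (1 - ∑ i, p i) p

section StepUp

variable {k n : ℕ} (σ : Equiv.Perm (Fin n)) (p : Fin n → ℝ)

lemma sum_segLength : ∑ o, segLength p o = 1 := by
  simp [Fintype.sum_option, segLength]

lemma cumul_segRank_some (i : Fin n) :
    cumul (segRank σ) (segLength p) (some i) = segB σ p i := by
  have h : ¬ n < (σ i : ℕ) := by have := (σ i).2; omega
  rw [cumul, segB, Finset.sum_filter, Finset.sum_filter, Fintype.sum_option]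
  simp [segRank, segLength, h]

lemma cumul_segRank_none : cumul (segRank σ) (segLength p) none = ∑ i, p i := by
  rw [cumul, Finset.sum_filter, Fintype.sum_option]
  simp [segRank, segLength]

lemma stepUp_eq_segMeasure :
    stepUp σ p = segMeasure (segRank 1) (segRank σ) (segLength p) := by
  have hA : ∀ i, segA p i = segB 1 p i := fun i => rfl
  have hslot : ∀ o, (volume : Measure ℝ).restrict (slot (segRank 1) (segLength p) o)
      = volume.restrict (Set.Icc (cumul (segRank 1) (segLength p) o)
        (cumul (segRank 1) (segLength p) o + segLength p o)) := fun o =>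
    Measure.restrict_congr_set Ico_ae_eq_Icc
  simp only [segMeasure, hslot, Fintype.sum_option, cumul_segRank_some, cumul_segRank_none]
  rw [add_comm, stepUp]
  simp [segLength, hA]

lemma prod_div_card_eq {f : Fin k → Fin n} {c : Comp k} {ψ : Fin c.len → Fin n}
    (hψ : ψ.Injective) (hf : ψ ∘ c.part = f)
    [Fintype {g : Equiv.Perm (Fin k) // f ∘ g = f}] :
    (∏ a, p (f a)) / Fintype.card {g : Equiv.Perm (Fin k) // f ∘ g = f}
      = ∏ i : Fin c.len, p (ψ i) ^ c.s i / ((c.s i).factorial : ℝ) := by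
  classical
  have hcard : ∀ j, Fintype.card {a // f a = j} = (Finset.univ.filter fun a => f a = j).card :=
    fun j => Fintype.card_subtype _
  have hfib : ∀ i, (Finset.univ.filter fun a => f a = ψ i).card = c.s i := by
    intro i
    rw [← Comp.card_part_eq]
    congr 1
    ext a
    simp [← hf, hψ.eq_iff]
  have hstab : Fintype.card {g : Equiv.Perm (Fin k) // f ∘ g = f}
      = ∏ j, ((Finset.univ.filter fun a => f a = j).card).factorial := by
    rw [← Finset.prod_congr rfl fun j _ => congrArg Nat.factorial (hcard j)]
    convert DomMulAct.stabilizer_card f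
  have hprod : ∏ a, p (f a) = ∏ j, p j ^ (Finset.univ.filter fun a => f a = j).card := by
    rw [← Finset.prod_fiberwise Finset.univ f]
    refine Finset.prod_congr rfl fun j _ => ?_
    rw [← Finset.prod_const]
    exact Finset.prod_congr rfl fun a ha => congrArg p (Finset.mem_filter.mp ha).2
  rw [hstab, hprod, Nat.cast_prod, ← Finset.prod_div_distrib]
  refine (Fintype.prod_of_injective ψ hψ _ _ (fun j hj => ?_) fun i => by rw [hfib]).symm
  have h0 : (Finset.univ.filter fun a => f a = j) = ∅ := by
    refine Finset.filter_eq_empty_iff.mpr fun a _ ha => hj ⟨c.part a, ?_⟩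
    rw [← ha, ← hf]
    rfl
  simp [h0]

/-- For an indecomposable pattern, assignments to all segments are assignments to the segments
indexed by `Fin n`. -/
noncomputable def someAssignmentEquiv (hk : 2 ≤ k) {τ : Equiv.Perm (Fin k)}
    (hτ : Indecomposable τ) :
    {f : Fin k → Fin n // IsAssignment Fin.val (fun i => (σ i : ℕ)) τ f}
      ≃ {F : Fin k → Option (Fin n) // IsAssignment (segRank 1) (segRank σ) τ F} :=
  Equiv.ofBijective (fun f => ⟨some ∘ f.1, f.2⟩) <| by
    constructor
    · intro f g h
      refine Subtype.ext (funext fun a => Option.some_injective _ ?_)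
      exact congrFun (congrArg Subtype.val h) a
    · rintro ⟨F, hF⟩
      have hex : ∀ a, ∃ i, F a = some i := fun a =>
        Option.ne_none_iff_exists'.mp (hF.ne_none hk hτ a)
      choose f hf using hex
      obtain rfl : F = some ∘ f := funext hf
      exact ⟨⟨f, hF⟩, rfl⟩

end StepUp

/-- **Observation (step-up permutons).** Let `τ` be a non-trivial indecomposable
permutation of order `k`, `σ` a permutation of order `n ≥ k` and `p` positive
weights with `Σ p_i ≤ 1`.  Then the step-up permuton `Φ_σ^p` satisfies
`t(τ,Φ_σ^p) = k! Σ_{𝒫 ∈ R(τ)} Σ_{ψ ∈ Occ(τ/𝒫,σ)} Π_i p_{ψ(i)}^{|P_i|}/|P_i|!`,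
the outer sum being over all `τ`-compressive partitions. -/
theorem pdens_stepUp {k n : ℕ} (hk : 2 ≤ k) (τ : Equiv.Perm (Fin k))
    (hτ : Indecomposable τ) (σ : Equiv.Perm (Fin n)) (hkn : k ≤ n)
    (p : Fin n → ℝ) (hp : ∀ i, 0 < p i) (hsum : ∑ i, p i ≤ 1) :
    ∃ P : Permuton, P.μ = stepUp σ p ∧
      pdens τ P = (k.factorial : ℝ) *
        ∑' (c : {c : Comp k // IsCompressive τ c}),
          ∑' (ψ : {ψ : Fin c.1.len → Fin n // IsOccQuot τ c.1 σ ψ}),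
            ∏ i : Fin c.1.len,
              p (ψ.1 i) ^ (c.1.s i) / ((c.1.s i).factorial : ℝ) := by
  classical
  have hv : ∀ o, 0 ≤ segLength p o := by
    rintro (_ | i)
    · exact sub_nonneg.mpr hsum
    · exact (hp i).le
  have hr := segRank_injective (1 : Equiv.Perm (Fin n))
  have hq := segRank_injective σ
  let P := Permuton.ofMarginals (segMeasure (segRank 1) (segRank σ) (segLength p))
    (map_fst_segMeasure hr hv (sum_segLength p)) (map_snd_segMeasure hq hv (sum_segLength p))
  refine ⟨P, (stepUp_eq_segMeasure σ p).symm, ?_⟩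
  have : IsProbabilityMeasure (segMeasure (segRank 1) (segRank σ) (segLength p)) := P.prob
  rw [pdens]
  congr 1
  refine (pi_segMeasure_pattern τ hr hq hv (sum_segLength p)).trans ?_
  have : Finite (Σ c : {c : Comp k // IsCompressive τ c},
      {ψ : Fin c.1.len → Fin n // IsOccQuot τ c.1 σ ψ}) :=
    Finite.of_equiv _ (assignmentEquiv τ σ).symm
  rw [← Summable.tsum_sigma (f := fun q : (Σ c : {c : Comp k // IsCompressive τ c},
      {ψ : Fin c.1.len → Fin n // IsOccQuot τ c.1 σ ψ}) => ∏ i : Fin q.1.1.len,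
        p (q.2.1 i) ^ (q.1.1.s i) / ((q.1.1.s i).factorial : ℝ)) Summable.of_finite,
    ← tsum_fintype (L := .unconditional _), ← ((assignmentEquiv τ σ).trans (someAssignmentEquiv σ hk hτ)).tsum_eq]
  refine tsum_congr fun q => ?_
  rw [← prod_div_card_eq p q.2.2.1.injective rfl]
  congr 2
  rw [Fintype.card_eq_nat_card, Fintype.card_eq_nat_card]
  refine Nat.card_congr (Equiv.subtypeEquivRight fun g => ?_)
  exact (Option.some_injective _).comp_left.eq_iff
end
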